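/- arXiv:1008.2398 — 5 statements merged into one kernel-verified Lean document; each statement's English description precedes it below -/
import Mathlib

section
/- For any cone C in ℝ³ with convex base K and apex v, the ratio Vol(C)/Vol(DC) is at most 4/7, where DC is the difference body of C; moreover if K is not centrally symmetric this ratio is strictly less than 4/7. -/
open MeasureTheory Pointwise
open scoped ENNReal

theorem bm_transport {α β : ℝ} {f : ℝ → ℝ} (hαβ : α < β)
    (hc : ContinuousOn f (Set.Ioo α β)) (hpos : ∀ x ∈ Set.Ioo α β, 0 < f x)
    (hi : IntegrableOn f (Set.Ioo α β)) :
    ∃ S : ℝ → ℝ, Set.MapsTo S (Set.Ioo α β) (Set.Ioo α β) ∧ StrictAntiOn S (Set.Ioo α β) ∧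
      ∀ x ∈ Set.Ioo α β, HasDerivAt S (-(f x / f (S x))) x := by
  have hi' : IntegrableOn f (Set.Icc α β) := by
    rwa [integrableOn_Icc_iff_integrableOn_Ioo]
  have hII : ∀ x ∈ Set.Icc α β, ∀ y ∈ Set.Icc α β, IntervalIntegrable f volume x y := by
    intro x hx y hy
    rw [intervalIntegrable_iff]
    refine hi'.mono_set ?_
    exact Set.uIoc_subset_uIcc.trans (Set.OrdConnected.uIcc_subset Set.ordConnected_Icc hx hy)
  have hα : α ∈ Set.Icc α β := ⟨le_rfl, hαβ.le⟩
  have hβ : β ∈ Set.Icc α β := ⟨hαβ.le, le_rfl⟩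
  set F : ℝ → ℝ := fun x => ∫ t in α..x, f t with hF
  have hFmono : StrictMonoOn F (Set.Icc α β) := by
    intro x hx y hy hxy
    have h1 : F y - F x = ∫ t in x..y, f t :=
      intervalIntegral.integral_interval_sub_left (hII α hα y hy) (hII α hα x hx)
    have h2 : 0 < ∫ t in x..y, f t :=
      intervalIntegral.intervalIntegral_pos_of_pos_on (hII x hx y hy)
        (fun t ht => hpos t ⟨hx.1.trans_lt ht.1, ht.2.trans_le hy.2⟩) hxy
    linarith
  have hFcont : ContinuousOn F (Set.Icc α β) := by
    have := intervalIntegral.continuousOn_primitive_interval (μ := volume) (f := f) (a := α) (b := β)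
      (by rwa [Set.uIcc_of_le hαβ.le])
    rwa [Set.uIcc_of_le hαβ.le] at this
  have hFder : ∀ x ∈ Set.Ioo α β, HasDerivAt F (f x) x := by
    intro x hx
    refine intervalIntegral.integral_hasDerivAt_right (hII α hα x ⟨hx.1.le, hx.2.le⟩) ?_
      (hc.continuousAt (Ioo_mem_nhds hx.1 hx.2))
    exact hc.stronglyMeasurableAtFilter isOpen_Ioo x hx
  set A := F β with hA
  have hF0 : F α = 0 := by simp [hF]
  have hApos : 0 < A := by rw [← hF0]; exact hFmono hα hβ hαβ
  have hsub : Set.Ioo α β ⊆ Set.Icc α β := Set.Ioo_subset_Icc_self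
  have hFmem : ∀ x ∈ Set.Ioo α β, F x ∈ Set.Ioo 0 A := by
    intro x hx
    refine ⟨?_, hFmono (hsub hx) hβ hx.2⟩
    rw [← hF0]; exact hFmono hα (hsub hx) hx.1
  have hsurj : ∀ y ∈ Set.Ioo 0 A, ∃ x ∈ Set.Ioo α β, F x = y := by
    intro y hy
    have := intermediate_value_Ioo hαβ.le hFcont
    rw [hF0] at this
    exact this hy
  choose! g hg1 hg2 using hsurj
  have hgF : ∀ x ∈ Set.Ioo α β, g (F x) = x := by
    intro x hx
    exact hFmono.injOn (hsub (hg1 _ (hFmem x hx))) (hsub hx) (hg2 _ (hFmem x hx))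
  have hgmono : StrictMonoOn g (Set.Ioo 0 A) := by
    intro x hx y hy hxy
    by_contra h
    have := hFmono.monotoneOn (hsub (hg1 y hy)) (hsub (hg1 x hx)) (not_lt.1 h)
    rw [hg2 x hx, hg2 y hy] at this
    linarith
  have hgcont : ∀ y ∈ Set.Ioo 0 A, ContinuousAt g y := by
    intro y hy
    refine hgmono.continuousAt_of_image_mem_nhds (Ioo_mem_nhds hy.1 hy.2) ?_
    have hm := hg1 y hy
    refine Filter.mem_of_superset (Ioo_mem_nhds hm.1 hm.2) ?_
    intro x hx
    exact ⟨F x, hFmem x hx, hgF x hx⟩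
  have hgder : ∀ y ∈ Set.Ioo 0 A, HasDerivAt g (f (g y))⁻¹ y := by
    intro y hy
    refine HasDerivAt.of_local_left_inverse (hgcont y hy) (hFder _ (hg1 y hy))
      (hpos _ (hg1 y hy)).ne' ?_
    filter_upwards [Ioo_mem_nhds hy.1 hy.2] with z hz using hg2 z hz
  have hAF : ∀ x ∈ Set.Ioo α β, A - F x ∈ Set.Ioo 0 A := by
    intro x hx
    have := hFmem x hx
    exact ⟨by linarith [this.2], by linarith [this.1]⟩
  refine ⟨fun x => g (A - F x), fun x hx => hg1 _ (hAF x hx), ?_, ?_⟩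
  · intro x hx y hy hxy
    refine hgmono (hAF y hy) (hAF x hx) ?_
    have := hFmono (hsub hx) (hsub hy) hxy
    linarith
  · intro x hx
    have h1 := hgder _ (hAF x hx)
    have h2 : HasDerivAt (fun x => A - F x) (-f x) x := (hFder x hx).const_sub A
    have h3 := h1.comp x h2
    have e : (f (g (A - F x)))⁻¹ * -f x = -(f x / f (g (A - F x))) := by
      rw [div_eq_mul_inv]; ring
    rw [e] at h3
    exact h3

theorem bm_fibers {K : Set (ℝ × ℝ)} (hK : IsCompact K) (hconv : Convex ℝ K)
    (hvol : volume K ≠ 0) :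
    ∃ (α β : ℝ) (lo hi : ℝ → ℝ), α < β ∧ Prod.fst '' K = Set.Icc α β ∧
      (∀ x ∈ Set.Icc α β, lo x ≤ hi x) ∧
      (∀ x ∈ Set.Icc α β, ∀ y, (x, y) ∈ K ↔ y ∈ Set.Icc (lo x) (hi x)) ∧
      ConcaveOn ℝ (Set.Icc α β) (fun x => hi x - lo x) ∧
      (∀ x ∈ Set.Ioo α β, 0 < hi x - lo x) ∧
      volume K = ∫⁻ x in Set.Ioo α β, ENNReal.ofReal (hi x - lo x) := by
  have hne : K.Nonempty := by
    rw [Set.nonempty_iff_ne_empty]; rintro rfl; simp at hvol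
  have hPc : IsCompact (Prod.fst '' K) := hK.image continuous_fst
  have hPconv : Convex ℝ (Prod.fst '' K) := hconv.linear_image (LinearMap.fst ℝ ℝ ℝ)
  have hPne : (Prod.fst '' K).Nonempty := hne.image _
  obtain ⟨α, β, hP⟩ : ∃ α β, Prod.fst '' K = Set.Icc α β :=
    ⟨_, _, eq_Icc_of_connected_compact ⟨hPne, hPconv.isPreconnected⟩ hPc⟩
  set fib : ℝ → Set ℝ := fun x => Prod.mk x ⁻¹' K with hfib
  have hfc : ∀ x, IsCompact (fib x) := by
    intro x
    have : fib x = Prod.snd '' (K ∩ Prod.fst ⁻¹' {x}) := by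
      ext y; simp only [hfib, Set.mem_preimage, Set.mem_image, Set.mem_inter_iff,
        Set.mem_singleton_iff, Prod.exists]
      constructor
      · intro h; exact ⟨x, y, ⟨h, rfl⟩, rfl⟩
      · rintro ⟨a, b, ⟨h, rfl⟩, rfl⟩; exact h
    rw [this]
    exact (hK.inter_right (isClosed_singleton.preimage continuous_fst)).image continuous_snd
  have hfconv : ∀ x, Convex ℝ (fib x) := by
    intro x y hy z hz a b ha hb hab
    have := hconv hy hz ha hb hab
    simp only [Prod.smul_mk, Prod.mk_add_mk, smul_eq_mul] at this
    rw [← add_mul, hab, one_mul] at this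
    exact this
  have hfne : ∀ x ∈ Set.Icc α β, (fib x).Nonempty := by
    intro x hx
    rw [← hP] at hx
    obtain ⟨⟨a, b⟩, h, rfl⟩ := hx
    exact ⟨b, h⟩
  have hfI : ∀ x, ∃ l h : ℝ, x ∈ Set.Icc α β → fib x = Set.Icc l h := by
    intro x
    by_cases hx : x ∈ Set.Icc α β
    · exact ⟨_, _, fun _ => eq_Icc_of_connected_compact ⟨hfne x hx, (hfconv x).isPreconnected⟩ (hfc x)⟩
    · exact ⟨0, 0, fun h => absurd h hx⟩
  choose lo hi hlh using hfI
  have hle : ∀ x ∈ Set.Icc α β, lo x ≤ hi x := by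
    intro x hx
    have := hfne x hx
    rw [hlh x hx] at this
    exact Set.nonempty_Icc.1 this
  have hmem : ∀ x ∈ Set.Icc α β, ∀ y, (x, y) ∈ K ↔ y ∈ Set.Icc (lo x) (hi x) := by
    intro x hx y
    rw [← hlh x hx]; rfl
  have hconc : ConcaveOn ℝ (Set.Icc α β) (fun x => hi x - lo x) := by
    refine ⟨convex_Icc _ _, ?_⟩
    intro x hx y hy a b ha hb hab
    have hz := (convex_Icc α β) hx hy ha hb hab
    have h1 := hconv ((hmem x hx (hi x)).2 ⟨hle x hx, le_rfl⟩)
      ((hmem y hy (hi y)).2 ⟨hle y hy, le_rfl⟩) ha hb hab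
    have h2 := hconv ((hmem x hx (lo x)).2 ⟨le_rfl, hle x hx⟩)
      ((hmem y hy (lo y)).2 ⟨le_rfl, hle y hy⟩) ha hb hab
    simp only [Prod.smul_mk, Prod.mk_add_mk] at h1 h2
    have h1' := ((hmem _ hz _).1 h1).2
    have h2' := ((hmem _ hz _).1 h2).1
    simp only [smul_eq_mul] at *
    linarith
  have hV : volume K = ∫⁻ x in Set.Ioo α β, ENNReal.ofReal (hi x - lo x) := by
    rw [Measure.volume_eq_prod, Measure.prod_apply hK.measurableSet,
      restrict_Ioo_eq_restrict_Icc, ← lintegral_indicator measurableSet_Icc]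
    congr 1
    ext x
    by_cases hx : x ∈ Set.Icc α β
    · rw [Set.indicator_of_mem hx]
      change volume (fib x) = _
      rw [hlh x hx, Real.volume_Icc]
    · rw [Set.indicator_of_notMem hx]
      have : Prod.mk x ⁻¹' K = ∅ := by
        rw [Set.eq_empty_iff_forall_notMem]
        intro y hy
        apply hx; rw [← hP]; exact ⟨_, hy, rfl⟩
      rw [this]; simp
  have hex : ∃ x ∈ Set.Ioo α β, 0 < hi x - lo x := by
    by_contra h
    push Not at h
    apply hvol
    rw [hV, setLIntegral_congr_fun (g := fun _ => 0) measurableSet_Ioo]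
    · simp
    · intro x hx; simpa using h x hx
  obtain ⟨x0, hx0, hpos0⟩ := hex
  refine ⟨α, β, lo, hi, hx0.1.trans hx0.2, hP, hle, hmem, hconc, ?_, hV⟩
  intro x hx
  -- choose an endpoint on the other side
  have key : ∀ e ∈ Set.Icc α β, ∀ a b : ℝ, 0 < a → 0 ≤ b → a + b = 1 → a * x0 + b * e = x →
      0 < hi x - lo x := by
    intro e he a b ha hb hab hx'
    have := hconc.2 (Set.Ioo_subset_Icc_self hx0) he ha.le hb hab
    simp only [smul_eq_mul] at this
    rw [hx'] at this
    have h1 := hle e he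
    have : 0 < a * (hi x0 - lo x0) := mul_pos ha hpos0
    have : 0 ≤ b * (hi e - lo e) := mul_nonneg hb (by linarith)
    linarith
  rcases le_total x x0 with h | h
  · have hd : 0 < x0 - α := by linarith [hx0.1]
    refine key α ⟨le_rfl, by linarith [hx0.1, hx0.2]⟩ ((x - α) / (x0 - α)) ((x0 - x) / (x0 - α))
      (div_pos (by linarith [hx.1]) hd) (div_nonneg (by linarith) hd.le) ?_ ?_
    · field_simp; ring
    · field_simp; ring
  · have hd : 0 < β - x0 := by linarith [hx0.2]
    refine key β ⟨by linarith [hx0.1, hx0.2], le_rfl⟩ ((β - x) / (β - x0)) ((x - x0) / (β - x0))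
      (div_pos (by linarith [hx.2]) hd) (div_nonneg (by linarith) hd.le) ?_ ?_
    · field_simp; ring
    · field_simp; ring

theorem bm_compact_sub {E : Type*} [AddCommGroup E] [TopologicalSpace E] [IsTopologicalAddGroup E]
    {A B : Set E} (hA : IsCompact A) (hB : IsCompact B) :
    IsCompact (A - B) := by
  rw [sub_eq_add_neg]; exact hA.add hB.neg

theorem bm_lower {K : Set (ℝ × ℝ)} (hK : IsCompact K) (hconv : Convex ℝ K)
    {α β : ℝ} {lo hi S : ℝ → ℝ} 
    (hle : ∀ x ∈ Set.Icc α β, lo x ≤ hi x)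
    (hmem : ∀ x ∈ Set.Icc α β, ∀ y, (x, y) ∈ K ↔ y ∈ Set.Icc (lo x) (hi x))
    (hpos : ∀ x ∈ Set.Ioo α β, 0 < hi x - lo x)
    (hSm : Set.MapsTo S (Set.Ioo α β) (Set.Ioo α β)) (hSa : StrictAntiOn S (Set.Ioo α β))
    (hSd : ∀ x ∈ Set.Ioo α β, HasDerivAt S (-((hi x - lo x) / (hi (S x) - lo (S x)))) x)
    {a b : ℝ} (ha : 0 < a) (hb : 0 < b) :
    ∫⁻ x in Set.Ioo α β, ENNReal.ofReal ((a + b * ((hi x - lo x) / (hi (S x) - lo (S x)))) *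
      (a * (hi x - lo x) + b * (hi (S x) - lo (S x)))) ≤ volume (a • K - b • K) := by
  have hD : IsCompact (a • K - b • K) := bm_compact_sub (hK.smul a) (hK.smul b)
  have hDc : Convex ℝ (a • K - b • K) := (hconv.smul a).sub (hconv.smul b)
  rw [Measure.volume_eq_prod, Measure.prod_apply hD.measurableSet]
  set Φ : ℝ → ℝ := fun x => a * x - b * S x with hΦ
  have hder : ∀ x ∈ Set.Ioo α β, HasDerivWithinAt Φ
      (a + b * ((hi x - lo x) / (hi (S x) - lo (S x)))) (Set.Ioo α β) x := by
    intro x hx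
    have h1 := ((hasDerivAt_id x).const_mul a).sub ((hSd x hx).const_mul b)
    have e : a * 1 - b * -((hi x - lo x) / (hi (S x) - lo (S x))) =
      (a + b * ((hi x - lo x) / (hi (S x) - lo (S x)))) := by ring
    rw [e] at h1
    exact h1.hasDerivWithinAt
  have hinj : Set.InjOn Φ (Set.Ioo α β) := by
    apply StrictMonoOn.injOn
    intro x hx y hy hxy
    have h1 := mul_lt_mul_of_pos_left (hSa hx hy hxy) hb
    have h2 := mul_lt_mul_of_pos_left hxy ha
    simp only [hΦ]; linarith
  refine le_trans ?_ (setLIntegral_le_lintegral (Φ '' Set.Ioo α β) _)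
  rw [lintegral_image_eq_lintegral_abs_deriv_mul measurableSet_Ioo hder hinj]
  refine setLIntegral_mono' measurableSet_Ioo ?_
  intro x hx
  have hSx := hSm hx
  have hx' := Set.Ioo_subset_Icc_self hx
  have hSx' := Set.Ioo_subset_Icc_self hSx
  have p1 := hpos x hx
  have p2 := hpos _ hSx
  have p3 : 0 < a + b * ((hi x - lo x) / (hi (S x) - lo (S x))) := by positivity
  rw [ENNReal.ofReal_mul p3.le, abs_of_pos p3]
  gcongr
  have hsub : Set.Icc (a * lo x - b * hi (S x)) (a * hi x - b * lo (S x)) ⊆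
      Prod.mk (Φ x) ⁻¹' (a • K - b • K) := by
    have hm : ∀ y y', (x, y) ∈ K → (S x, y') ∈ K → (Φ x, a * y - b * y') ∈ a • K - b • K := by
      intro y y' h1 h2
      refine ⟨a • (x, y), Set.smul_mem_smul_set h1, b • (S x, y'), Set.smul_mem_smul_set h2, ?_⟩
      simp [hΦ]
    have h1 := hm (lo x) (hi (S x)) ((hmem x hx' _).2 ⟨le_rfl, hle x hx'⟩)
      ((hmem _ hSx' _).2 ⟨hle _ hSx', le_rfl⟩)
    have h2 := hm (hi x) (lo (S x)) ((hmem x hx' _).2 ⟨hle x hx', le_rfl⟩)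
      ((hmem _ hSx' _).2 ⟨le_rfl, hle _ hSx'⟩)
    have hcf : Convex ℝ (Prod.mk (Φ x) ⁻¹' (a • K - b • K)) := by
      intro y hy z hz s t hs ht hst
      have := hDc hy hz hs ht hst
      simp only [Prod.smul_mk, Prod.mk_add_mk, smul_eq_mul] at this
      rw [← add_mul, hst, one_mul] at this
      exact this
    exact hcf.ordConnected.out h1 h2
  refine le_trans (le_of_eq ?_) (measure_mono hsub)
  rw [Real.volume_Icc]
  congr 1; ring

theorem bm_integrable {α β : ℝ} {f : ℝ → ℝ} (hc : ContinuousOn f (Set.Ioo α β))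
    (hpos : ∀ x ∈ Set.Ioo α β, 0 < f x)
    (hV : ∫⁻ x in Set.Ioo α β, ENNReal.ofReal (f x) ≠ ⊤) :
    IntegrableOn f (Set.Ioo α β) := by
  refine ⟨hc.aestronglyMeasurable measurableSet_Ioo, ?_⟩
  rw [hasFiniteIntegral_iff_ofReal]
  · exact hV.lt_top
  · filter_upwards [ae_restrict_mem measurableSet_Ioo] with x hx using (hpos x hx).le

theorem bm_plane {K : Set (ℝ × ℝ)} (hK : IsCompact K) (hconv : Convex ℝ K)
    {a b : ℝ} (ha : 0 < a) (hb : 0 < b) :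
    ENNReal.ofReal ((a + b) ^ 2) * volume K ≤ volume (a • K - b • K) := by
  by_cases hvol : volume K = 0
  · simp [hvol]
  obtain ⟨α, β, lo, hi, hαβ, hP, hle, hmem, hconc, hpos, hV⟩ := bm_fibers hK hconv hvol
  have hc : ContinuousOn (fun x => hi x - lo x) (Set.Ioo α β) :=
    (hconc.subset Set.Ioo_subset_Icc_self (convex_Ioo _ _)).continuousOn isOpen_Ioo
  have hint : IntegrableOn (fun x => hi x - lo x) (Set.Ioo α β) :=
    bm_integrable hc hpos (hV ▸ hK.measure_lt_top.ne)
  obtain ⟨S, hSm, hSa, hSd⟩ := bm_transport hαβ hc hpos hint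
  refine le_trans ?_ (bm_lower hK hconv hle hmem hpos hSm hSa hSd ha hb)
  rw [hV, ← lintegral_const_mul' _ _ ENNReal.ofReal_ne_top]
  refine setLIntegral_mono' measurableSet_Ioo ?_
  intro x hx
  rw [← ENNReal.ofReal_mul (by positivity)]
  apply ENNReal.ofReal_le_ofReal
  have p1 := hpos x hx
  have p2 := hpos _ (hSm hx)
  generalize hi x - lo x = u at *
  generalize hi (S x) - lo (S x) = w at *
  have : (a + b * (u / w)) * (a * u + b * w) = (a + b) ^ 2 * u + a * b * (u - w) ^ 2 / w := by
    field_simp; ring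
  rw [this]
  have : 0 ≤ a * b * (u - w) ^ 2 / w := by positivity
  linarith

theorem bm_eq {K : Set (ℝ × ℝ)} (hK : IsCompact K) (hconv : Convex ℝ K)
    (hvol : volume K ≠ 0) (heq : volume (K - K) ≤ 4 * volume K) :
    ∃ α β : ℝ, Prod.fst '' K = Set.Icc α β ∧ α < β ∧
      ∫ p in K, p.1 = (α + β) / 2 * (volume K).toReal := by
  obtain ⟨α, β, lo, hi, hαβ, hP, hle, hmem, hconc, hpos, hV⟩ := bm_fibers hK hconv hvol
  refine ⟨α, β, hP, hαβ, ?_⟩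
  have hc : ContinuousOn (fun x => hi x - lo x) (Set.Ioo α β) :=
    (hconc.subset Set.Ioo_subset_Icc_self (convex_Ioo _ _)).continuousOn isOpen_Ioo
  have hVfin : volume K ≠ ⊤ := hK.measure_lt_top.ne
  have hint : IntegrableOn (fun x => hi x - lo x) (Set.Ioo α β) :=
    bm_integrable hc hpos (hV ▸ hVfin)
  obtain ⟨S, hSm, hSa, hSd⟩ := bm_transport hαβ hc hpos hint
  have hlow := bm_lower hK hconv hle hmem hpos hSm hSa hSd one_pos one_pos
  rw [one_smul] at hlow
  have hSc : ContinuousOn S (Set.Ioo α β) := fun x hx =>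
    (hSd x hx).continuousAt.continuousWithinAt
  have hcS : ContinuousOn (fun x => hi (S x) - lo (S x)) (Set.Ioo α β) := hc.comp hSc hSm
  -- equality a.e.
  have hae : (fun x => ENNReal.ofReal (4 * (hi x - lo x))) =ᵐ[volume.restrict (Set.Ioo α β)]
      (fun x => ENNReal.ofReal ((1 + 1 * ((hi x - lo x) / (hi (S x) - lo (S x)))) *
      (1 * (hi x - lo x) + 1 * (hi (S x) - lo (S x))))) := by
    have hI : ∫⁻ x in Set.Ioo α β, ENNReal.ofReal (4 * (hi x - lo x)) = 4 * volume K := by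
      rw [hV, ← lintegral_const_mul' _ _ (by simp)]
      congr 1; ext x
      rw [ENNReal.ofReal_mul (by norm_num)]; norm_num
    apply ae_eq_of_ae_le_of_lintegral_le
    · filter_upwards [ae_restrict_mem measurableSet_Ioo] with x hx
      apply ENNReal.ofReal_le_ofReal
      have p1 := hpos x hx
      have p2 := hpos _ (hSm hx)
      generalize hi x - lo x = u at *
      generalize hi (S x) - lo (S x) = w at *
      have : (1 + 1 * (u / w)) * (1 * u + 1 * w) = 4 * u + (u - w) ^ 2 / w := by
        field_simp; ring
      rw [this]
      have : 0 ≤ (u - w) ^ 2 / w := by positivity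
      linarith
    · rw [hI]; exact ENNReal.mul_ne_top (by simp) hVfin
    · refine AEMeasurable.ennreal_ofReal ?_
      refine ContinuousOn.aemeasurable ?_ measurableSet_Ioo
      refine (continuousOn_const.add (continuousOn_const.mul (hc.div hcS ?_))).mul
        ((continuousOn_const.mul hc).add (continuousOn_const.mul hcS))
      intro x hx; exact (hpos _ (hSm hx)).ne'
    · rw [hI]; exact hlow.trans heq
  have hfS : Set.EqOn (fun x => hi x - lo x) (fun x => hi (S x) - lo (S x)) (Set.Ioo α β) := by
    refine Measure.eqOn_open_of_ae_eq (μ := volume) ?_ isOpen_Ioo hc hcS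
    filter_upwards [hae, ae_restrict_mem measurableSet_Ioo] with x h hx
    have p1 := hpos x hx
    have p2 := hpos _ (hSm hx)
    rw [ENNReal.ofReal_eq_ofReal_iff (by positivity) (by positivity)] at h
    generalize hi x - lo x = u at *
    generalize hi (S x) - lo (S x) = w at *
    have : (1 + 1 * (u / w)) * (1 * u + 1 * w) = 4 * u + (u - w) ^ 2 / w := by
      field_simp; ring
    rw [this] at h
    have h0 : (u - w) ^ 2 / w = 0 := by linarith
    rw [div_eq_zero_iff] at h0
    rcases h0 with h0 | h0
    · have := pow_eq_zero_iff (two_ne_zero) |>.1 h0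
      linarith
    · exact absurd h0 p2.ne'
  have hd1 : ∀ x ∈ Set.Ioo α β, HasDerivAt (fun x => x + S x) 0 x := by
    intro x hx
    have h := (hasDerivAt_id x).add (hSd x hx)
    have e := hfS hx
    simp only at e
    rw [← e, div_self (hpos x hx).ne', add_neg_cancel] at h
    exact h
  obtain ⟨σ, hσ⟩ := isOpen_Ioo.exists_is_const_of_deriv_eq_zero (s := Set.Ioo α β)
    isPreconnected_Ioo (f := fun x => x + S x)
    (fun x hx => (hd1 x hx).differentiableAt.differentiableWithinAt)
    (fun x hx => (hd1 x hx).deriv)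
  have hσ1 : σ ≤ α + β := by
    by_contra h
    push Not at h
    obtain ⟨x, hx1, hx2⟩ := exists_between (show α < min β (σ - β) from lt_min hαβ (by linarith))
    have hx : x ∈ Set.Ioo α β := ⟨hx1, hx2.trans_le (min_le_left _ _)⟩
    have := (hSm hx).2
    have := hσ x hx
    have := hx2.trans_le (min_le_right _ _)
    linarith
  have hσ2 : α + β ≤ σ := by
    by_contra h
    push Not at h
    obtain ⟨x, hx1, hx2⟩ := exists_between (show max α (σ - α) < β from max_lt hαβ (by linarith))
    have hx : x ∈ Set.Ioo α β := ⟨(le_max_left _ _).trans_lt hx1, hx2⟩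
    have := (hSm hx).1
    have := hσ x hx
    have := (le_max_right _ _).trans_lt hx1
    linarith
  have hσe : σ = α + β := le_antisymm hσ1 hσ2
  have hsym : ∀ x ∈ Set.Ioo α β, hi (α + β - x) - lo (α + β - x) = hi x - lo x := by
    intro x hx
    have h1 := hσ x hx
    have h2 : S x = α + β - x := by linarith
    rw [← h2]; exact (hfS hx).symm
  -- Fubini
  have hVr : (volume K).toReal = ∫ x in Set.Ioo α β, (hi x - lo x) := by
    rw [hV, integral_eq_lintegral_of_nonneg_ae]
    · filter_upwards [ae_restrict_mem measurableSet_Ioo] with x hx using (hpos x hx).le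
    · exact hint.aestronglyMeasurable
  have hFub : ∫ p in K, p.1 = ∫ x in Set.Ioo α β, x * (hi x - lo x) := by
    have hIK : IntegrableOn (fun p : ℝ × ℝ => p.1) K :=
      continuous_fst.continuousOn.integrableOn_compact hK
    rw [← integral_indicator hK.measurableSet, Measure.volume_eq_prod, integral_prod]
    · rw [← integral_Icc_eq_integral_Ioo, ← integral_indicator measurableSet_Icc]
      congr 1; ext x
      by_cases hx : x ∈ Set.Icc α β
      · rw [Set.indicator_of_mem hx]
        have : (fun y => K.indicator (fun p : ℝ × ℝ => p.1) (x, y)) =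
            (Set.Icc (lo x) (hi x)).indicator (fun _ => x) := by
          ext y
          by_cases hy : (x, y) ∈ K
          · rw [Set.indicator_of_mem hy, Set.indicator_of_mem ((hmem x hx y).1 hy)]
          · rw [Set.indicator_of_notMem hy, Set.indicator_of_notMem (fun h => hy ((hmem x hx y).2 h))]
        rw [this, integral_indicator measurableSet_Icc]
        simp [hle x hx, mul_comm]
      · rw [Set.indicator_of_notMem hx]
        have : (fun y => K.indicator (fun p : ℝ × ℝ => p.1) (x, y)) = fun _ => 0 := by
          ext y
          rw [Set.indicator_of_notMem]
          intro hy; apply hx; rw [← hP]; exact ⟨_, hy, rfl⟩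
        rw [this]; simp
    · rw [← Measure.volume_eq_prod]
      exact hIK.integrable_indicator hK.measurableSet
  -- reflection
  have hxint : IntegrableOn (fun x => x * (hi x - lo x)) (Set.Ioo α β) := by
    refine Integrable.bdd_mul (c := max |α| |β|) hint continuous_id.aestronglyMeasurable ?_
    filter_upwards [ae_restrict_mem measurableSet_Ioo] with x hx
    rw [Real.norm_eq_abs]
    exact abs_le_max_abs_abs hx.1.le hx.2.le
  have hrefl : ∫ x in Set.Ioo α β, x * (hi x - lo x) =
      ∫ x in Set.Ioo α β, (α + β - x) * (hi x - lo x) := by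
    rw [← integral_indicator measurableSet_Ioo, ← integral_indicator measurableSet_Ioo,
      ← integral_sub_left_eq_self _ volume (α + β)]
    congr 1; ext x
    by_cases hx : x ∈ Set.Ioo α β
    · have : α + β - x ∈ Set.Ioo α β := ⟨by linarith [hx.2], by linarith [hx.1]⟩
      rw [Set.indicator_of_mem hx, Set.indicator_of_mem this, hsym x hx]
    · have : α + β - x ∉ Set.Ioo α β := fun h => hx ⟨by linarith [h.2], by linarith [h.1]⟩
      rw [Set.indicator_of_notMem hx, Set.indicator_of_notMem this]
  have hsum : ∫ x in Set.Ioo α β, (α + β - x) * (hi x - lo x) =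
      (α + β) * (∫ x in Set.Ioo α β, (hi x - lo x)) - ∫ x in Set.Ioo α β, x * (hi x - lo x) := by
    rw [← integral_const_mul, ← integral_sub (hint.const_mul _) hxint]
    congr 1; ext x; ring
  rw [hFub, hVr]
  linarith

theorem bm_sym {K : Set (ℝ × ℝ)} (hK : IsCompact K) (hconv : Convex ℝ K)
    (hvol : volume K ≠ 0) (heq : volume (K - K) ≤ 4 * volume K) :
    ∃ c : ℝ × ℝ, ∀ x ∈ K, (2 : ℝ) • c - x ∈ K := by
  have hVfin : volume K ≠ ⊤ := hK.measure_lt_top.ne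
  have hVpos : 0 < (volume K).toReal := ENNReal.toReal_pos hvol hVfin
  have hIK : IntegrableOn (fun p : ℝ × ℝ => p) K :=
    continuous_id.continuousOn.integrableOn_compact hK
  refine ⟨(volume K).toReal⁻¹ • ∫ p in K, p, ?_⟩
  set c := (volume K).toReal⁻¹ • ∫ p in K, p with hcdef
  intro x hx
  by_contra hnot
  obtain ⟨l, u, hl1, hl2⟩ := geometric_hahn_banach_closed_point hconv hK.isClosed hnot
  have hlp : ∀ p : ℝ × ℝ, l p = l (1, 0) * p.1 + l (0, 1) * p.2 := by
    intro p
    have : p = p.1 • ((1 : ℝ), (0 : ℝ)) + p.2 • ((0 : ℝ), (1 : ℝ)) := by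
      ext <;> simp
    conv_lhs => rw [this]
    rw [map_add, map_smul, map_smul]; simp [mul_comm]
  set a := l (1, 0) with ha
  set b := l (0, 1) with hb
  have hab : 0 < a ^ 2 + b ^ 2 := by
    by_contra h
    have ha0 : a = 0 := by nlinarith [sq_nonneg a, sq_nonneg b]
    have hb0 : b = 0 := by nlinarith [sq_nonneg a, sq_nonneg b]
    have h1 := hl1 x hx
    rw [hlp] at h1 hl2
    rw [ha0, hb0] at h1 hl2
    linarith
  set L : (ℝ × ℝ) →L[ℝ] (ℝ × ℝ) :=
    l.prod ((-b) • ContinuousLinearMap.fst ℝ ℝ ℝ + a • ContinuousLinearMap.snd ℝ ℝ ℝ) with hL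
  have hL1 : ∀ p, (L p).1 = l p := fun p => rfl
  have hL2 : ∀ p, (L p).2 = -b * p.1 + a * p.2 := fun p => by simp [hL]
  have hLinj : Function.Injective L := by
    rw [injective_iff_map_eq_zero]
    intro p hp
    have h1 : l p = 0 := by rw [← hL1, hp]; rfl
    have h2 : -b * p.1 + a * p.2 = 0 := by rw [← hL2, hp]; rfl
    rw [hlp] at h1
    have e1 : (a ^ 2 + b ^ 2) * p.1 = 0 := by linear_combination a * h1 - b * h2
    have e2 : (a ^ 2 + b ^ 2) * p.2 = 0 := by linear_combination b * h1 + a * h2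
    ext
    · simpa [hab.ne'] using e1
    · simpa [hab.ne'] using e2
  have hdet : L.det ≠ 0 := by
    have h := (LinearEquiv.ofInjectiveEndo (L : (ℝ × ℝ) →ₗ[ℝ] (ℝ × ℝ)) hLinj).isUnit_det'
    have e : ((LinearEquiv.ofInjectiveEndo (L : (ℝ × ℝ) →ₗ[ℝ] (ℝ × ℝ)) hLinj :
      (ℝ × ℝ) ≃ₗ[ℝ] (ℝ × ℝ)) : (ℝ × ℝ) →ₗ[ℝ] (ℝ × ℝ)) = (L : (ℝ × ℝ) →ₗ[ℝ] (ℝ × ℝ)) := by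
      ext <;> rfl
    rw [e] at h
    exact h.ne_zero
  have hvolL : ∀ s, volume (L '' s) = ENNReal.ofReal |L.det| * volume s :=
    fun s => Measure.addHaar_image_continuousLinearMap volume L s
  have hd0 : ENNReal.ofReal |L.det| ≠ 0 := by simpa using hdet
  have hsubimg : L '' K - L '' K = L '' (K - K) := (Set.image_sub L).symm
  obtain ⟨α, β, hP, hαβ, hI⟩ := bm_eq (hK.image L.continuous)
    (hconv.linear_image (L : (ℝ × ℝ) →ₗ[ℝ] (ℝ × ℝ)))
    (by rw [hvolL]; exact mul_ne_zero hd0 hvol)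
    (by rw [hsubimg, hvolL, hvolL, mul_left_comm]; gcongr)
  rw [integral_image_eq_integral_abs_det_fderiv_smul volume hK.measurableSet
    (fun x _ => L.hasFDerivWithinAt) hLinj.injOn, integral_smul, hvolL, ENNReal.toReal_mul,
    ENNReal.toReal_ofReal (abs_nonneg _)] at hI
  simp only [hL1, smul_eq_mul] at hI
  have hdp : 0 < |L.det| := abs_pos.2 hdet
  have hI' : ∫ p in K, l p = (α + β) / 2 * (volume K).toReal := by
    apply mul_left_cancel₀ hdp.ne'
    rw [hI]; ring
  have hlc : l c = (α + β) / 2 := by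
    rw [hcdef, map_smul, ← ContinuousLinearMap.integral_comp_comm l hIK, hI', smul_eq_mul]
    field_simp
  have hlx : α ≤ l x := by
    have : (L x).1 ∈ Prod.fst '' (L '' K) := ⟨_, ⟨x, hx, rfl⟩, rfl⟩
    rw [hP] at this
    exact this.1
  have hβm : β ∈ Prod.fst '' (L '' K) := by rw [hP]; exact ⟨hαβ.le, le_rfl⟩
  obtain ⟨_, ⟨k, hk, rfl⟩, hkβ⟩ := hβm
  have := hl1 k hk
  rw [hL1] at hkβ
  rw [map_sub, map_smul, hlc, smul_eq_mul] at hl2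
  linarith

def bmCone (K : Set (ℝ × ℝ)) : Set (ℝ × (ℝ × ℝ)) :=
  {q | q.1 ∈ Set.Icc (0 : ℝ) 1 ∧ ∃ k ∈ K, q.2 = (1 - q.1) • k}

theorem bmCone_compact {K : Set (ℝ × ℝ)} (hK : IsCompact K) : IsCompact (bmCone K) := by
  have : bmCone K = (fun q : ℝ × (ℝ × ℝ) => (q.1, (1 - q.1) • q.2)) '' (Set.Icc (0 : ℝ) 1 ×ˢ K) := by
    ext ⟨t, w⟩
    constructor
    · rintro ⟨h1, k, hk, h2⟩
      exact ⟨(t, k), ⟨h1, hk⟩, by simp only at h2; simp [h2]⟩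
    · rintro ⟨⟨t', k⟩, ⟨h1, hk⟩, h2⟩
      simp only [Prod.mk.injEq] at h2
      obtain ⟨rfl, rfl⟩ := h2
      exact ⟨h1, k, hk, rfl⟩
  rw [this]
  exact (isCompact_Icc.prod hK).image (by fun_prop)

theorem bm_vol_smul {K : Set (ℝ × ℝ)} (r : ℝ) :
    volume (r • K) = ENNReal.ofReal (r ^ 2) * volume K := by
  rw [Measure.addHaar_smul]
  simp

theorem bm_lint {g G : ℝ → ℝ} {a b : ℝ} (hab : a ≤ b) (hg : Continuous g) (h0 : ∀ x, 0 ≤ g x)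
    (hG : ∀ x, HasDerivAt G (g x) x) :
    ∫⁻ x in Set.Ioo a b, ENNReal.ofReal (g x) = ENNReal.ofReal (G b - G a) := by
  rw [restrict_Ioo_eq_restrict_Ioc, ← ofReal_integral_eq_lintegral_ofReal,
    ← intervalIntegral.integral_of_le hab,
    intervalIntegral.integral_eq_sub_of_hasDerivAt (fun x _ => hG x) (hg.intervalIntegrable _ _)]
  · exact (hg.integrableOn_Icc).mono_set Set.Ioc_subset_Icc_self
  · exact Filter.Eventually.of_forall h0

theorem bmCone_vol {K : Set (ℝ × ℝ)} (hK : IsCompact K) :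
    volume (bmCone K) = ENNReal.ofReal (1 / 3) * volume K := by
  rw [Measure.volume_eq_prod, Measure.prod_apply (bmCone_compact hK).measurableSet]
  have : (fun t => volume (Prod.mk t ⁻¹' bmCone K)) =
      (Set.Icc (0 : ℝ) 1).indicator (fun t => ENNReal.ofReal ((1 - t) ^ 2) * volume K) := by
    ext t
    by_cases ht : t ∈ Set.Icc (0 : ℝ) 1
    · rw [Set.indicator_of_mem ht, ← bm_vol_smul]
      congr 1
      ext w
      simp only [bmCone, Set.mem_preimage, Set.mem_ofPred_eq, Set.mem_smul_set]
      constructor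
      · rintro ⟨_, k, hk, h⟩; exact ⟨k, hk, h.symm⟩
      · rintro ⟨k, hk, h⟩; exact ⟨ht, k, hk, h.symm⟩
    · rw [Set.indicator_of_notMem ht]
      have : Prod.mk t ⁻¹' bmCone K = ∅ := by
        rw [Set.eq_empty_iff_forall_notMem]
        intro y hy
        exact ht hy.1
      rw [this]; simp
  rw [this, lintegral_indicator measurableSet_Icc, lintegral_mul_const' _ _ hK.measure_lt_top.ne,
    ← restrict_Ioo_eq_restrict_Icc,
    bm_lint (G := fun t => -(1 - t) ^ 3 / 3) zero_le_one (by fun_prop) (fun x => by positivity)]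
  · norm_num
  · intro x
    have := ((((hasDerivAt_id x).const_sub 1).pow 3).neg).div_const 3
    exact this.congr_deriv (by simp)

theorem bmCone_diff {K : Set (ℝ × ℝ)} (hK : IsCompact K) (hconv : Convex ℝ K)
    (h0 : (0 : ℝ × ℝ) ∈ K) :
    ENNReal.ofReal (14 / 3) * volume K ≤ volume (bmCone K - bmCone K) ∧
    (volume (bmCone K - bmCone K) ≤ ENNReal.ofReal (14 / 3) * volume K →
      volume (K - K) ≤ 4 * volume K) := by
  have hVfin : volume K ≠ ⊤ := hK.measure_lt_top.ne
  have hDc : IsCompact (bmCone K - bmCone K) :=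
    bm_compact_sub (bmCone_compact hK) (bmCone_compact hK)
  set A : ℝ → ℝ≥0∞ := fun s => volume (Prod.mk s ⁻¹' (bmCone K - bmCone K)) with hA
  have hAm : Measurable A := measurable_measure_prodMk_left hDc.measurableSet
  have hD : volume (bmCone K - bmCone K) = ∫⁻ s, A s := by
    rw [Measure.volume_eq_prod, Measure.prod_apply hDc.measurableSet]
  have hbase : ∀ k ∈ K, ((0 : ℝ), k) ∈ bmCone K := by
    intro k hk
    exact ⟨⟨le_rfl, zero_le_one⟩, k, hk, by simp⟩
  have hmemc : ∀ s ∈ Set.Ioo (0 : ℝ) 1, ∀ k ∈ K, (s, (1 - s) • k) ∈ bmCone K := by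
    intro s hs k hk
    exact ⟨⟨hs.1.le, hs.2.le⟩, k, hk, rfl⟩
  have hsub1 : ∀ s ∈ Set.Ioo (0 : ℝ) 1,
      (1 - s) • K - (1 : ℝ) • K ⊆ Prod.mk s ⁻¹' (bmCone K - bmCone K) := by
    rintro s hs w ⟨_, ⟨k, hk, rfl⟩, _, ⟨k', hk', rfl⟩, rfl⟩
    exact ⟨_, hmemc s hs k hk, _, hbase k' hk', by simp⟩
  have hsub2 : ∀ s ∈ Set.Ioo (-1 : ℝ) 0,
      (1 : ℝ) • K - (1 + s) • K ⊆ Prod.mk s ⁻¹' (bmCone K - bmCone K) := by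
    rintro s hs w ⟨_, ⟨k, hk, rfl⟩, _, ⟨k', hk', rfl⟩, rfl⟩
    refine ⟨_, hbase k hk, _, hmemc (-s) ⟨by linarith [hs.2], by linarith [hs.1]⟩ k' hk', by simp⟩
  have hB1 : ∀ s ∈ Set.Ioo (0 : ℝ) 1, ENNReal.ofReal ((2 - s) ^ 2) * volume K ≤ A s := by
    intro s hs
    have := bm_plane hK hconv (show 0 < 1 - s by linarith [hs.2]) one_pos
    rw [show 1 - s + 1 = 2 - s by ring] at this
    exact this.trans (measure_mono (hsub1 s hs))
  have hB2 : ∀ s ∈ Set.Ioo (-1 : ℝ) 0, ENNReal.ofReal ((2 + s) ^ 2) * volume K ≤ A s := by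
    intro s hs
    have := bm_plane hK hconv one_pos (show 0 < 1 + s by linarith [hs.1])
    rw [show 1 + (1 + s) = 2 + s by ring] at this
    exact this.trans (measure_mono (hsub2 s hs))
  have hI1 : ∫⁻ s in Set.Ioo (0 : ℝ) 1, ENNReal.ofReal ((2 - s) ^ 2) * volume K =
      ENNReal.ofReal (7 / 3) * volume K := by
    rw [lintegral_mul_const' _ _ hVfin,
      bm_lint (G := fun t => -(2 - t) ^ 3 / 3) zero_le_one (by fun_prop) (fun x => by positivity)]
    · norm_num
    · intro x
      have := ((((hasDerivAt_id x).const_sub 2).pow 3).neg).div_const 3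
      exact this.congr_deriv (by simp)
  have hI2 : ∫⁻ s in Set.Ioo (-1 : ℝ) 0, ENNReal.ofReal ((2 + s) ^ 2) * volume K =
      ENNReal.ofReal (7 / 3) * volume K := by
    rw [lintegral_mul_const' _ _ hVfin,
      bm_lint (G := fun t => (2 + t) ^ 3 / 3) (by norm_num) (by fun_prop) (fun x => by positivity)]
    · norm_num
    · intro x
      have := (((hasDerivAt_id x).const_add 2).pow 3).div_const 3
      exact this.congr_deriv (by simp)
  have hP : ENNReal.ofReal (7 / 3) * volume K ≤ ∫⁻ s in Set.Ioo (0 : ℝ) 1, A s := by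
    rw [← hI1]; exact setLIntegral_mono' measurableSet_Ioo hB1
  have hN : ENNReal.ofReal (7 / 3) * volume K ≤ ∫⁻ s in Set.Ioo (-1 : ℝ) 0, A s := by
    rw [← hI2]; exact setLIntegral_mono' measurableSet_Ioo hB2
  have hPN : (∫⁻ s in Set.Ioo (0 : ℝ) 1, A s) + ∫⁻ s in Set.Ioo (-1 : ℝ) 0, A s ≤
      volume (bmCone K - bmCone K) := by
    rw [hD, ← lintegral_union measurableSet_Ioo]
    · exact setLIntegral_le_lintegral _ _
    · rw [Set.disjoint_left]
      intro x h1 h2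
      linarith [h1.1, h2.2]
  have h14 : ENNReal.ofReal (14 / 3) * volume K =
      ENNReal.ofReal (7 / 3) * volume K + ENNReal.ofReal (7 / 3) * volume K := by
    rw [← add_mul, ← ENNReal.ofReal_add (by norm_num) (by norm_num)]; norm_num
  have h7fin : ENNReal.ofReal (7 / 3) * volume K ≠ ⊤ :=
    ENNReal.mul_ne_top ENNReal.ofReal_ne_top hVfin
  refine ⟨?_, ?_⟩
  · rw [h14]
    exact (add_le_add hP hN).trans hPN
  intro hle
  have hPle : ∫⁻ s in Set.Ioo (0 : ℝ) 1, A s ≤ ENNReal.ofReal (7 / 3) * volume K := by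
    have h1 := (add_le_add_right hN (∫⁻ s in Set.Ioo (0 : ℝ) 1, A s)).trans (hPN.trans hle)
    rw [h14] at h1
    exact (ENNReal.add_le_add_iff_right h7fin).1 h1
  have hae : (fun s => ENNReal.ofReal ((2 - s) ^ 2) * volume K)
      =ᵐ[volume.restrict (Set.Ioo (0 : ℝ) 1)] A := by
    apply ae_eq_of_ae_le_of_lintegral_le
    · filter_upwards [ae_restrict_mem measurableSet_Ioo] with s hs using hB1 s hs
    · rw [hI1]; exact h7fin
    · exact hAm.aemeasurable
    · rw [hI1]; exact hPle
  have hKKc : IsCompact (K - K) := bm_compact_sub hK hK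
  have hKKfin : volume (K - K) ≠ ⊤ := hKKc.measure_lt_top.ne
  set d := (volume (K - K)).toReal with hd
  set V := (volume K).toReal with hV
  have hA3 : ∀ s ∈ Set.Ioo (0 : ℝ) 1, ENNReal.ofReal ((1 - s) ^ 2) * volume (K - K) ≤ A s := by
    intro s hs
    rw [← bm_vol_smul]
    refine measure_mono (subset_trans ?_ (hsub1 s hs))
    rintro _ ⟨_, ⟨k, hk, k', hk', rfl⟩, rfl⟩
    refine ⟨(1 - s) • k, ⟨k, hk, rfl⟩, (1 : ℝ) • ((1 - s) • k'), ⟨_, ?_, rfl⟩, ?_⟩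
    · exact hconv.smul_mem_of_zero_mem h0 hk' ⟨by linarith [hs.2], by linarith [hs.1]⟩
    · simp [smul_sub]
  have hφ : Set.EqOn (fun s => max ((2 - s) ^ 2 * V - (1 - s) ^ 2 * d) 0)
      (fun s => (2 - s) ^ 2 * V - (1 - s) ^ 2 * d) (Set.Ioo (0 : ℝ) 1) := by
    refine Measure.eqOn_open_of_ae_eq (μ := volume) ?_ isOpen_Ioo
      (Continuous.continuousOn (by fun_prop)) (Continuous.continuousOn (by fun_prop))
    filter_upwards [hae, ae_restrict_mem measurableSet_Ioo] with s h hs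
    have h3 := hA3 s hs
    rw [← h] at h3
    have h4 := ENNReal.toReal_mono (ENNReal.mul_ne_top ENNReal.ofReal_ne_top hVfin) h3
    rw [ENNReal.toReal_mul, ENNReal.toReal_mul, ENNReal.toReal_ofReal (by positivity),
      ENNReal.toReal_ofReal (by positivity)] at h4
    exact max_eq_left (by linarith)
  have hcl : closure (Set.Ioo (0 : ℝ) 1) ⊆ {s | 0 ≤ (2 - s) ^ 2 * V - (1 - s) ^ 2 * d} := by
    refine closure_minimal ?_ (isClosed_le continuous_const (by fun_prop))
    intro s hs
    have := hφ hs
    simp only [max_eq_left_iff] at this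
    exact this
  rw [closure_Ioo zero_ne_one] at hcl
  have h5 := hcl (Set.left_mem_Icc.2 zero_le_one)
  simp only [Set.mem_ofPred_eq] at h5
  rw [← ENNReal.toReal_le_toReal hKKfin (ENNReal.mul_ne_top (by simp) hVfin), ENNReal.toReal_mul]
  norm_num at h5 ⊢
  linarith

theorem bm_haar {E : Type*} [NormedAddCommGroup E] [InnerProductSpace ℝ E] [FiniteDimensional ℝ E]
    [MeasurableSpace E] [BorelSpace E] (Ψ : (ℝ × (ℝ × ℝ)) ≃L[ℝ] E) :
    ∃ c : ℝ, 0 < c ∧ ∀ X : Set (ℝ × (ℝ × ℝ)), (volume (Ψ '' X)).toReal = c * (volume X).toReal := by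
  have hH : (Measure.map Ψ.symm (volume : Measure E)).IsAddHaarMeasure :=
    Ψ.symm.isAddHaarMeasure_map volume
  have h3 : (volume : Measure (ℝ × (ℝ × ℝ))).IsAddHaarMeasure := by
    rw [Measure.volume_eq_prod]
    exact Measure.prod.instIsAddHaarMeasure (volume : Measure ℝ) (volume : Measure (ℝ × ℝ))
  have h := Measure.isAddLeftInvariant_eq_smul (Measure.map Ψ.symm (volume : Measure E))
    (volume : Measure (ℝ × (ℝ × ℝ)))
  refine ⟨_, NNReal.coe_pos.2
    (Measure.addHaarScalarFactor_pos_of_isAddHaarMeasure (Measure.map Ψ.symm (volume : Measure E))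
      (volume : Measure (ℝ × (ℝ × ℝ)))), ?_⟩
  intro X
  have e : (Measure.map Ψ.symm (volume : Measure E)) X = volume (Ψ '' X) := by
    have := Ψ.symm.toHomeomorph.toMeasurableEquiv.map_apply (μ := volume) X
    rw [Ψ.image_eq_preimage_symm]
    exact this
  rw [← e]
  conv_lhs => rw [h]
  simp [ENNReal.toReal_smul, NNReal.smul_def]

theorem cone_volume_ratio_le_four_sevenths
    (H : AffineSubspace ℝ (EuclideanSpace ℝ (Fin 3)))
    (hH : Module.finrank ℝ H.direction = 2)
    (K : Set (EuclideanSpace ℝ (Fin 3)))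
    (hKcompact : IsCompact K) (hKconv : Convex ℝ K)
    (hKH : K ⊆ (H : Set (EuclideanSpace ℝ (Fin 3))))
    (hKdim : affineSpan ℝ K = H)
    (v : EuclideanSpace ℝ (Fin 3)) (hv : v ∉ H) :
    (volume (convexHull ℝ (K ∪ {v}))).toReal /
        (volume ((2⁻¹ : ℝ) • (convexHull ℝ (K ∪ {v}) - convexHull ℝ (K ∪ {v})))).toReal
      ≤ 4 / 7 ∧
    ((¬ ∃ c, ∀ x, x ∈ K ↔ (2 : ℝ) • c - x ∈ K) →
      (volume (convexHull ℝ (K ∪ {v}))).toReal /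
          (volume ((2⁻¹ : ℝ) • (convexHull ℝ (K ∪ {v}) - convexHull ℝ (K ∪ {v})))).toReal
        < 4 / 7) := by
  rcases K.eq_empty_or_nonempty with rfl | ⟨k0, hk0⟩
  · have : volume ({v} : Set (EuclideanSpace ℝ (Fin 3))) = 0 := measure_singleton v
    simp only [Set.empty_union, convexHull_singleton, this]
    norm_num
  have hk0H : k0 ∈ H := hKH hk0
  -- coordinates
  let b := Module.finBasisOfFinrankEq ℝ H.direction hH
  let Ψ₀ : (ℝ × (ℝ × ℝ)) →ₗ[ℝ] EuclideanSpace ℝ (Fin 3) :=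
    (LinearMap.toSpanSingleton ℝ _ (v - k0)).coprod
      ((LinearMap.toSpanSingleton ℝ _ ((b 0 : H.direction) : EuclideanSpace ℝ (Fin 3))).coprod
        (LinearMap.toSpanSingleton ℝ _ ((b 1 : H.direction) : EuclideanSpace ℝ (Fin 3))))
  have hΨ₀ : ∀ t x y, Ψ₀ (t, (x, y)) = t • (v - k0) +
      ((x • b 0 + y • b 1 : H.direction) : EuclideanSpace ℝ (Fin 3)) := by
    intro t x y; simp [Ψ₀]
  have hvd : v - k0 ∉ H.direction := by
    intro h
    apply hv
    have := AffineSubspace.vadd_mem_of_mem_direction h hk0H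
    simpa using this
  have hinj : Function.Injective Ψ₀ := by
    rw [injective_iff_map_eq_zero]
    rintro ⟨t, x, y⟩ h
    rw [hΨ₀] at h
    have ht : t = 0 := by
      by_contra ht
      apply hvd
      have h2 : v - k0 = t⁻¹ • -((x • b 0 + y • b 1 : H.direction) : EuclideanSpace ℝ (Fin 3)) := by
        rw [← eq_neg_iff_add_eq_zero] at h
        rw [← h, smul_smul, inv_mul_cancel₀ ht, one_smul]
      rw [h2]
      exact H.direction.smul_mem _ (H.direction.neg_mem (Subtype.mem _))
    subst ht
    rw [zero_smul, zero_add] at h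
    have h3 : x • b 0 + y • b 1 = 0 := Subtype.ext h
    have h4 := Fintype.linearIndependent_iff.1 b.linearIndependent ![x, y]
      (by simpa [Fin.sum_univ_two] using h3)
    have hx := h4 0
    have hy := h4 1
    simp at hx hy
    simp [hx, hy]
  have hfr : Module.finrank ℝ (ℝ × (ℝ × ℝ)) = Module.finrank ℝ (EuclideanSpace ℝ (Fin 3)) := by
    simp
  let Ψ : (ℝ × (ℝ × ℝ)) ≃L[ℝ] EuclideanSpace ℝ (Fin 3) :=
    (LinearEquiv.ofInjectiveOfFinrankEq Ψ₀ hinj hfr).toContinuousLinearEquiv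
  have hΨ : ∀ t x y, Ψ (t, (x, y)) = t • (v - k0) +
      ((x • b 0 + y • b 1 : H.direction) : EuclideanSpace ℝ (Fin 3)) := fun t x y => hΨ₀ t x y
  have hΨ10 : Ψ (1, 0) = v - k0 := by
    have := hΨ 1 0 0
    rw [zero_smul, zero_smul, add_zero, one_smul, Submodule.coe_zero, add_zero] at this
    exact this
  -- the base in coordinates
  let K' : Set (ℝ × ℝ) := {w | k0 + Ψ (0, w) ∈ K}
  have hK'ex : ∀ k ∈ K, ∃ w, k0 + Ψ (0, w) = k := by
    intro k hk
    have hd : k - k0 ∈ H.direction := AffineSubspace.vsub_mem_direction (hKH hk) hk0H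
    refine ⟨(b.repr ⟨_, hd⟩ 0, b.repr ⟨_, hd⟩ 1), ?_⟩
    have := b.sum_repr ⟨_, hd⟩
    rw [Fin.sum_univ_two] at this
    rw [hΨ, this]; simp
  have hK'c : IsCompact K' := by
    have e : K' = (fun x => (Ψ.symm (x - k0)).2) '' K := by
      ext w
      constructor
      · intro hw
        exact ⟨_, hw, by simp⟩
      · rintro ⟨k, hk, rfl⟩
        obtain ⟨w, rfl⟩ := hK'ex k hk
        simpa [K'] using hk
    rw [e]
    exact hKcompact.image (by fun_prop)
  have hK'conv : Convex ℝ K' := by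
    intro w hw z hz s t hs ht hst
    have := hKconv hw hz hs ht hst
    have e : s • (k0 + Ψ (0, w)) + t • (k0 + Ψ (0, z)) = k0 + Ψ (0, s • w + t • z) := by
      have : ((0 : ℝ), s • w + t • z) = s • ((0 : ℝ), w) + t • ((0 : ℝ), z) := by simp
      rw [this, map_add, map_smul, map_smul, smul_add, smul_add]
      have : k0 = s • k0 + t • k0 := by rw [← add_smul, hst, one_smul]
      conv_rhs => rw [this]
      abel
    rw [e] at this
    exact this
  have hK'0 : (0 : ℝ × ℝ) ∈ K' := by
    have : ((0 : ℝ), (0 : ℝ × ℝ)) = 0 := rfl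
    simp only [K', Set.mem_ofPred_eq, this, map_zero, add_zero]; exact hk0
  have hC : convexHull ℝ (K ∪ {v}) = k0 +ᵥ (Ψ '' bmCone K') := by
    rw [Set.union_singleton, convexHull_insert ⟨k0, hk0⟩, hKconv.convexHull_eq]
    have key : ∀ (t : ℝ) (w : ℝ × ℝ), k0 + Ψ (t, (1 - t) • w) =
        t • v + (1 - t) • (k0 + Ψ (0, w)) := by
      intro t w
      have : (t, (1 - t) • w) = t • ((1 : ℝ), (0 : ℝ × ℝ)) + (1 - t) • ((0 : ℝ), w) := by simp
      rw [this, map_add, map_smul, map_smul, hΨ10]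
      module
    ext x
    rw [mem_convexJoin]
    simp only [Set.mem_singleton_iff, exists_eq_left]
    rw [Set.mem_vadd_set]
    constructor
    · rintro ⟨k, hk, s, t, hs, ht, hst, rfl⟩
      obtain ⟨w, rfl⟩ := hK'ex k hk
      have : t = 1 - s := by linarith
      subst this
      refine ⟨_, ⟨(s, (1 - s) • w), ⟨⟨hs, by simp only; linarith⟩, w, hk, rfl⟩, rfl⟩, key s w⟩
    · rintro ⟨_, ⟨⟨t, w'⟩, ⟨ht, w, hw, hw'⟩, rfl⟩, rfl⟩
      simp only at hw' ht
      subst hw'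
      refine ⟨_, hw, t, 1 - t, ht.1, by linarith [ht.2], by ring, (key t w).symm⟩
  have hCC : convexHull ℝ (K ∪ {v}) - convexHull ℝ (K ∪ {v}) =
      Ψ '' (bmCone K' - bmCone K') := by
    rw [hC, Set.image_sub]
    ext x
    constructor
    · rintro ⟨_, ⟨p, hp, rfl⟩, _, ⟨q, hq, rfl⟩, rfl⟩
      exact ⟨p, hp, q, hq, by simp⟩
    · rintro ⟨p, hp, q, hq, rfl⟩
      exact ⟨_, ⟨p, hp, rfl⟩, _, ⟨q, hq, rfl⟩, by simp⟩
  obtain ⟨c, hc, hvol⟩ := bm_haar Ψ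
  have e1 : (volume (convexHull ℝ (K ∪ {v}))).toReal = c * (1 / 3 * (volume K').toReal) := by
    rw [hC, measure_vadd, hvol, bmCone_vol hK'c, ENNReal.toReal_mul,
      ENNReal.toReal_ofReal (by norm_num)]
  have e2 : (volume ((2⁻¹ : ℝ) • (convexHull ℝ (K ∪ {v}) - convexHull ℝ (K ∪ {v})))).toReal =
      1 / 8 * (c * (volume (bmCone K' - bmCone K')).toReal) := by
    rw [Measure.addHaar_smul, ENNReal.toReal_mul, hCC, hvol, ENNReal.toReal_ofReal (abs_nonneg _)]
    simp
    norm_num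
  rw [e1, e2]
  obtain ⟨h1, h2⟩ := bmCone_diff hK'c hK'conv hK'0
  have hKf : volume K' ≠ ⊤ := hK'c.measure_lt_top.ne
  have hDf : volume (bmCone K' - bmCone K') ≠ ⊤ :=
    (bm_compact_sub (bmCone_compact hK'c) (bmCone_compact hK'c)).measure_lt_top.ne
  have hprodf : ENNReal.ofReal (14 / 3) * volume K' ≠ ⊤ :=
    ENNReal.mul_ne_top ENNReal.ofReal_ne_top hKf
  have h1' : 14 / 3 * (volume K').toReal ≤ (volume (bmCone K' - bmCone K')).toReal := by
    have := ENNReal.toReal_mono hDf h1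
    rwa [ENNReal.toReal_mul, ENNReal.toReal_ofReal (by norm_num)] at this
  by_cases hV0 : volume K' = 0
  · simp only [hV0]; norm_num
  have hVpos : 0 < (volume K').toReal := ENNReal.toReal_pos hV0 hKf
  have hDpos : 0 < (volume (bmCone K' - bmCone K')).toReal := by linarith
  refine ⟨?_, ?_⟩
  · rw [div_le_iff₀ (by positivity)]
    nlinarith
  · intro hns
    have hlt : 14 / 3 * (volume K').toReal < (volume (bmCone K' - bmCone K')).toReal := by
      rw [lt_iff_not_ge]
      intro hge
      apply hns
      have hle : volume (bmCone K' - bmCone K') ≤ ENNReal.ofReal (14 / 3) * volume K' := by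
        rw [← ENNReal.toReal_le_toReal hDf hprodf, ENNReal.toReal_mul,
          ENNReal.toReal_ofReal (by norm_num)]
        exact hge
      obtain ⟨z, hz⟩ := bm_sym hK'c hK'conv hV0 (h2 hle)
      have hfwd : ∀ x ∈ K, (2 : ℝ) • (k0 + Ψ (0, z)) - x ∈ K := by
        intro x hx
        obtain ⟨w, rfl⟩ := hK'ex x hx
        have h3 : k0 + Ψ (0, (2 : ℝ) • z - w) ∈ K := hz w hx
        have e : ((0 : ℝ), (2 : ℝ) • z - w) = (2 : ℝ) • ((0 : ℝ), z) - ((0 : ℝ), w) := by simp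
        rw [e, map_sub, map_smul] at h3
        convert h3 using 1
        module
      refine ⟨k0 + Ψ (0, z), fun x => ⟨hfwd x, fun h => ?_⟩⟩
      have := hfwd _ h
      rwa [sub_sub_cancel] at this
    rw [div_lt_iff₀ (by positivity)]
    nlinarith
end

section
/- For a tetrahedron T in ℝ³, the volume of T equals 2/5 times the volume of its difference body DT, and among all cones over convex bases the tetrahedron achieves the minimum ratio Vol(C)/Vol(DC) = 2/5. -/
open MeasureTheory Pointwise
open scoped ENNReal

abbrev E3 := EuclideanSpace ℝ (Fin 3)

lemma rs_int : ∫⁻ t in Set.Ioc (0:ℝ) 1, ENNReal.ofReal ((1 - t ^ (1/3:ℝ))^3) = ENNReal.ofReal (1/20) := by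
  have hc : Continuous (fun t : ℝ => (1 - t ^ (1/3:ℝ))^3) := by
    have : Continuous (fun t : ℝ => t ^ (1/3:ℝ)) := Real.continuous_rpow_const (by norm_num)
    fun_prop
  rw [← ofReal_integral_eq_lintegral_ofReal]
  · congr 1
    rw [← intervalIntegral.integral_of_le zero_le_one]
    have h1 : ∀ t ∈ Set.uIcc (0:ℝ) 1, (1 - t ^ (1/3:ℝ))^3 = 1 - 3 * t ^ (1/3:ℝ) + 3 * t ^ (2/3:ℝ) - t := by
      intro t ht
      rw [Set.uIcc_of_le zero_le_one] at ht
      have h2 : t ^ (2/3:ℝ) = (t ^ (1/3:ℝ))^2 := by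
        rw [← Real.rpow_natCast, ← Real.rpow_mul ht.1]; norm_num
      have h3 : t = (t ^ (1/3:ℝ))^3 := by
        rw [← Real.rpow_natCast, ← Real.rpow_mul ht.1]; norm_num
      rw [h2]
      linear_combination h3
    rw [intervalIntegral.integral_congr h1]
    have c1 : Continuous (fun t : ℝ => t ^ (1/3:ℝ)) := Real.continuous_rpow_const (by norm_num)
    have c2 : Continuous (fun t : ℝ => t ^ (2/3:ℝ)) := Real.continuous_rpow_const (by norm_num)
    rw [intervalIntegral.integral_sub, intervalIntegral.integral_add, intervalIntegral.integral_sub,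
      intervalIntegral.integral_const_mul, intervalIntegral.integral_const_mul,
      integral_rpow (Or.inl (by norm_num)), integral_rpow (Or.inl (by norm_num))]
    · norm_num
    all_goals apply Continuous.intervalIntegrable; fun_prop
  · exact (hc.integrableOn_Icc).mono_set Set.Ioc_subset_Icc_self
  · filter_upwards [ae_restrict_mem measurableSet_Ioc] with t ht
    have : t ^ (1/3:ℝ) ≤ 1 := Real.rpow_le_one ht.1.le ht.2 (by norm_num)
    exact pow_nonneg (by linarith) 3

def ov (K : Set E3) (x : E3) : Set E3 := {y | y ∈ K ∧ y - x ∈ K}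

lemma ov_meas {K : Set E3} (hK : IsCompact K) : MeasurableSet {q : E3 × E3 | q.2 ∈ K ∧ q.2 - q.1 ∈ K} := by
  have hm := hK.isClosed.measurableSet
  exact (measurable_snd hm).inter ((measurable_snd.sub measurable_fst) hm)

lemma ov_int {K : Set E3} (hK : IsCompact K) : ∫⁻ x, volume (ov K x) = volume K * volume K := by
  have h := ov_meas hK
  have h1 := Measure.prod_apply (μ := (volume : Measure E3)) (ν := (volume : Measure E3)) h
  have h2 := Measure.prod_apply_symm (μ := (volume : Measure E3)) (ν := (volume : Measure E3)) h
  have h3 : ∫⁻ x, volume (ov K x) = ∫⁻ y, K.indicator (fun _ => volume K) y := by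
    refine (h1.symm.trans h2).trans ?_
    refine lintegral_congr fun y => ?_
    by_cases hy : y ∈ K
    · rw [Set.indicator_of_mem hy]
      have : ((fun x => (x, y)) ⁻¹' {q : E3 × E3 | q.2 ∈ K ∧ q.2 - q.1 ∈ K}) = (fun x => y - x) ⁻¹' K := by
        ext x; simp [hy]
      rw [this]
      exact (Measure.measurePreserving_sub_left (volume : Measure E3) y).measure_preimage
        hK.isClosed.measurableSet.nullMeasurableSet
    · rw [Set.indicator_of_notMem hy]
      have : ((fun x => (x, y)) ⁻¹' {q : E3 × E3 | q.2 ∈ K ∧ q.2 - q.1 ∈ K}) = ∅ := by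
        ext x; simp [hy]
      rw [this]; simp
  rw [h3, lintegral_indicator hK.isClosed.measurableSet]
  simp

lemma vol_smul (r : ℝ) (hr : 0 ≤ r) (S : Set E3) : volume (r • S) = ENNReal.ofReal (r^3) * volume S := by
  rw [Measure.addHaar_smul]
  simp [abs_of_nonneg (pow_nonneg hr 3)]

lemma ov_lower {K : Set E3} (hK : Convex ℝ K) {l : ℝ} (h0 : 0 ≤ l) (h1 : l ≤ 1) {x : E3}
    (hx : x ∈ l • (K - K)) : ENNReal.ofReal ((1 - l)^3) * volume K ≤ volume (ov K x) := by
  obtain ⟨_, ⟨a, ha, b, hb, rfl⟩, rfl⟩ := hx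
  rw [← vol_smul _ (by linarith), ← measure_vadd volume (l • a)]
  apply measure_mono
  rintro _ ⟨_, ⟨k, hk, rfl⟩, rfl⟩
  refine ⟨?_, ?_⟩
  · exact hK ha hk h0 (by linarith) (by ring)
  · have := hK hb hk h0 (by linarith : 0 ≤ 1 - l) (by ring)
    convert this using 1
    simp only [vadd_eq_add, smul_sub]
    abel

lemma diff_compact {K : Set E3} (hK : IsCompact K) : IsCompact (K - K) := by
  have := (hK.prod hK).image continuous_sub
  rwa [Set.image_prod] at this

lemma rs_core {K : Set E3} (hK : IsCompact K) (hc : Convex ℝ K) (hV : volume K ≠ 0) :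
    ENNReal.ofReal (1/20) * volume (K - K) ≤ volume K ∧
    ((∀ x, (ov K x).Nonempty → ∃ l : ℝ, 0 ≤ l ∧ l ≤ 1 ∧ x ∈ l • (K - K) ∧
      volume (ov K x) ≤ ENNReal.ofReal ((1 - l)^3) * volume K) →
      volume K = ENNReal.ofReal (1/20) * volume (K - K)) := by
  have hT : volume K ≠ ⊤ := hK.measure_lt_top.ne
  have hle : ∀ x, volume (ov K x) ≤ volume K := fun x => measure_mono fun y hy => hy.1
  have hms : Measurable fun x => volume (ov K x) := measurable_measure_prodMk_left (ov_meas hK)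
  set f : E3 → ℝ := fun x => (volume (ov K x) / volume K).toReal with hf
  have hft : ∀ x, volume (ov K x) / volume K ≠ ⊤ := fun x =>
    (ENNReal.div_lt_top (ne_top_of_le_ne_top hT (hle x)) hV).ne
  have hD : NullMeasurableSet (K - K) volume := (diff_compact hK).isClosed.measurableSet.nullMeasurableSet
  have e1 : ∫⁻ x, ENNReal.ofReal (f x) = volume K := by
    have : ∀ x, ENNReal.ofReal (f x) = volume (ov K x) * (volume K)⁻¹ := fun x =>
      ENNReal.ofReal_toReal (hft x)
    rw [lintegral_congr this, lintegral_mul_const _ hms, ov_int hK, mul_assoc,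
      ENNReal.mul_inv_cancel hV hT, mul_one]
  have hfm : Measurable f := (hms.div_const _).ennreal_toReal
  have e2 := lintegral_eq_lintegral_meas_le (volume : Measure E3) (f := f)
    (Filter.Eventually.of_forall fun x => ENNReal.toReal_nonneg) hfm.aemeasurable
  rw [e1] at e2
  have hmem : ∀ t x, t ≤ f x ↔ ENNReal.ofReal t * volume K ≤ volume (ov K x) := by
    intro t x
    rw [← ENNReal.ofReal_le_iff_le_toReal (hft x), ENNReal.le_div_iff_mul_le (Or.inl hV) (Or.inl hT)]
  have hs : ∀ t ∈ Set.Ioc (0:ℝ) 1, 0 < t ^ (1/3:ℝ) ∧ t ^ (1/3:ℝ) ≤ 1 ∧ (t ^ (1/3:ℝ))^3 = t := by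
    intro t ht
    refine ⟨Real.rpow_pos_of_pos ht.1 _, Real.rpow_le_one ht.1.le ht.2 (by norm_num), ?_⟩
    rw [← Real.rpow_natCast, ← Real.rpow_mul ht.1.le]; norm_num
  have hsub : ∀ t ∈ Set.Ioc (0:ℝ) 1, (1 - t ^ (1/3:ℝ)) • (K - K) ⊆ {x | t ≤ f x} := by
    intro t ht x hx
    obtain ⟨s0, s1, s3⟩ := hs t ht
    have := ov_lower hc (by linarith) (by linarith) hx
    rw [Set.mem_ofPred_eq, hmem]
    rwa [sub_sub_cancel, s3] at this
  have e3 : ∫⁻ t in Set.Ioc (0:ℝ) 1, volume ((1 - t ^ (1/3:ℝ)) • (K - K)) =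
      ENNReal.ofReal (1/20) * volume (K - K) := by
    rw [← rs_int, ← lintegral_mul_const']
    · refine setLIntegral_congr_fun measurableSet_Ioc fun t ht => ?_
      exact vol_smul _ (by linarith [(hs t ht).2.1]) _
    · exact (diff_compact hK).measure_lt_top.ne
  have e4 : ∫⁻ t in Set.Ioi (0:ℝ), volume {x | t ≤ f x} = ∫⁻ t in Set.Ioc (0:ℝ) 1, volume {x | t ≤ f x} := by
    rw [← Set.Ioc_union_Ioi_eq_Ioi (zero_le_one (α := ℝ)), lintegral_union measurableSet_Ioi]
    · have : ∫⁻ t in Set.Ioi (1:ℝ), volume {x | t ≤ f x} = ∫⁻ t in Set.Ioi (1:ℝ), 0 := by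
        refine setLIntegral_congr_fun measurableSet_Ioi fun t ht => ?_
        have : {x | t ≤ f x} = ∅ := by
          ext x
          simp only [Set.mem_ofPred_eq, Set.mem_empty_iff_false, iff_false, not_le]
          refine lt_of_le_of_lt ?_ ht
          refine ENNReal.toReal_le_of_le_ofReal zero_le_one ?_
          rw [ENNReal.ofReal_one]
          exact ENNReal.div_le_of_le_mul (by simpa using hle x)
        simp [this]
      rw [this]; simp
    · exact Set.Ioc_disjoint_Ioi le_rfl
  rw [e4] at e2
  constructor
  · rw [← e3]
    conv_rhs => rw [e2]
    exact setLIntegral_mono' measurableSet_Ioc fun t ht => measure_mono (hsub t ht)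
  · intro H
    rw [← e3]
    conv_lhs => rw [e2]
    refine setLIntegral_congr_fun measurableSet_Ioc fun t ht => ?_
    refine congrArg _ (Set.Subset.antisymm ?_ (hsub t ht))
    intro x hx
    obtain ⟨s0, s1, s3⟩ := hs t ht
    rw [Set.mem_ofPred_eq, hmem] at hx
    have hne : (ov K x).Nonempty := by
      by_contra hne
      rw [Set.not_nonempty_iff_eq_empty] at hne
      rw [hne, measure_empty, nonpos_iff_eq_zero, mul_eq_zero] at hx
      rcases hx with hx | hx
      · rw [ENNReal.ofReal_eq_zero] at hx; linarith [ht.1]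
      · exact hV hx
    obtain ⟨l, l0, l1, hxl, hvl⟩ := H x hne
    have h5 := hx.trans hvl
    rw [ENNReal.mul_le_mul_iff_left hV hT, ENNReal.ofReal_le_ofReal_iff (by apply pow_nonneg; linarith), ← s3] at h5
    have h6 : t ^ (1/3:ℝ) ≤ 1 - l := le_of_pow_le_pow_left₀ (by norm_num) (by linarith) h5
    -- l ≤ 1 - s
    obtain ⟨_, ⟨a, ha, b, hb, rfl⟩, rfl⟩ := hxl
    have hDc : Convex ℝ (K - K) := hc.sub hc
    have h0 : (0:E3) ∈ K - K := ⟨a, ha, a, ha, sub_self a⟩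
    have hmm : a - b ∈ K - K := ⟨a, ha, b, hb, rfl⟩
    rcases eq_or_lt_of_le l0 with h | h
    · subst h
      refine ⟨0, h0, by simp⟩
    · have hpos : 0 < 1 - t ^ (1/3:ℝ) := by linarith
      refine ⟨(l / (1 - t ^ (1/3:ℝ))) • (a - b), ?_, ?_⟩
      · exact hDc.smul_mem_of_zero_mem h0 hmm ⟨by positivity, by rw [div_le_one hpos]; linarith⟩
      · simp only [smul_smul]; rw [mul_div_cancel₀ _ hpos.ne']

lemma rs_half {K : Set E3} :
    volume ((2⁻¹:ℝ) • (K - K)) = ENNReal.ofReal (1/8) * volume (K - K) := by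
  rw [vol_smul _ (by norm_num)]; norm_num

lemma ov_simplex (b : AffineBasis (Fin 4) ℝ E3) (x : E3)
    (hne : (ov (convexHull ℝ (Set.range b)) x).Nonempty) :
    ∃ l : ℝ, 0 ≤ l ∧ l ≤ 1 ∧
      x ∈ l • (convexHull ℝ (Set.range b) - convexHull ℝ (Set.range b)) ∧
      volume (ov (convexHull ℝ (Set.range b)) x) ≤
        ENNReal.ofReal ((1 - l)^3) * volume (convexHull ℝ (Set.range b)) := by
  have hT : ∀ w : Fin 4 → ℝ, (∀ i, 0 ≤ w i) → ∑ i, w i = 1 →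
      ∑ i, w i • b i ∈ convexHull ℝ (Set.range b) := fun w hw h1 =>
    (convex_convexHull ℝ _).sum_mem (fun i _ => hw i) h1
      (fun i _ => subset_convexHull ℝ _ (Set.mem_range_self i))
  have hcv : ∀ y ∈ convexHull ℝ (Set.range b), ∀ i, 0 ≤ b.coord i y := by
    intro y hy
    rw [b.convexHull_eq_nonneg_coord] at hy
    exact hy
  -- coordinates of the vector x
  set a : Fin 4 → ℝ := fun i => b.coord i x - b.coord i 0 with ha
  have hsub : ∀ y i, b.coord i (y - x) = b.coord i y - a i := by
    intro y i
    have h1 := (b.coord i).linearMap_vsub y (y - x)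
    have h2 := (b.coord i).linearMap_vsub x 0
    simp only [vsub_eq_sub, sub_sub_cancel, sub_zero] at h1 h2
    simp only [ha]
    linarith
  have hasum : ∑ i, a i = 0 := by
    simp only [ha, Finset.sum_sub_distrib, b.sum_coord_apply_eq_one, sub_self]
  have hax : ∑ i, a i • b i = x := by
    simp only [ha, sub_smul, Finset.sum_sub_distrib, b.linear_combination_coord_eq_self, sub_zero]
  set m : Fin 4 → ℝ := fun i => max (a i) 0 with hm
  have hm0 : ∀ i, 0 ≤ m i := fun i => le_max_right _ _
  have hma : ∀ i, a i ≤ m i := fun i => le_max_left _ _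
  set S := ∑ i, m i with hS
  have hS0 : 0 ≤ S := Finset.sum_nonneg fun i _ => hm0 i
  have hcm : ∀ y ∈ ov (convexHull ℝ (Set.range b)) x, ∀ i, m i ≤ b.coord i y := by
    intro y hy i
    have h1 := hcv _ hy.2 i
    rw [hsub] at h1
    exact max_le (by linarith) (hcv _ hy.1 i)
  obtain ⟨y0, hy0⟩ := hne
  have hS1 : S ≤ 1 := by
    rw [← b.sum_coord_apply_eq_one y0]
    exact Finset.sum_le_sum fun i _ => hcm y0 hy0 i
  have key : ∀ w : Fin 4 → ℝ, (∀ i, 0 ≤ w i) → ∀ r, ∑ i, w i = r →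
      ∑ i, w i • b i ∈ r • convexHull ℝ (Set.range b) := by
    intro w hw r hr
    have hr0 : 0 ≤ r := hr ▸ Finset.sum_nonneg fun i _ => hw i
    rcases eq_or_lt_of_le hr0 with h | h
    · subst h
      have : ∀ i, w i = 0 := fun i =>
        (Finset.sum_eq_zero_iff_of_nonneg (fun i _ => hw i)).1 hr i (Finset.mem_univ i)
      refine ⟨y0, hy0.1, by simp [this]⟩
    · refine ⟨_, hT (fun i => w i / r) (fun i => div_nonneg (hw i) hr0) ?_, ?_⟩
      · rw [← Finset.sum_div, hr, div_self h.ne']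
      · simp only [Finset.smul_sum, smul_smul, mul_div_cancel₀ _ h.ne']
  refine ⟨S, hS0, hS1, ?_, ?_⟩
  · obtain ⟨u, hu, hu'⟩ := key m hm0 S rfl
    obtain ⟨v, hv, hv'⟩ := key (fun i => m i - a i) (fun i => sub_nonneg.2 (hma i)) S
      (by rw [Finset.sum_sub_distrib, hasum, sub_zero])
    refine ⟨u - v, ⟨u, hu, v, hv, rfl⟩, ?_⟩
    simp only at hu' hv' ⊢
    rw [smul_sub, hu', hv', ← Finset.sum_sub_distrib, ← hax]
    refine Finset.sum_congr rfl fun i _ => ?_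
    rw [← sub_smul, sub_sub_cancel]
  · rw [← vol_smul _ (by linarith), ← measure_vadd volume (∑ i, m i • b i) ((1 - S) • convexHull ℝ (Set.range b))]
    apply measure_mono
    intro y hy
    refine ⟨_, key (fun i => b.coord i y - m i) (fun i => sub_nonneg.2 (hcm y hy i)) (1 - S)
      (by rw [Finset.sum_sub_distrib, b.sum_coord_apply_eq_one]), ?_⟩
    simp only [vadd_eq_add, sub_smul, Finset.sum_sub_distrib, b.linear_combination_coord_eq_self]
    abel

lemma vol_ne_zero {s : Set E3} (h : affineSpan ℝ s = ⊤) : volume (convexHull ℝ s) ≠ 0 := by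
  have := interior_convexHull_nonempty_iff_affineSpan_eq_top.2 h
  exact (Measure.measure_pos_of_nonempty_interior volume this).ne'

theorem tetrahedron_diff_body_ratio
    (p : Fin 4 → EuclideanSpace ℝ (Fin 3)) (hp : AffineIndependent ℝ p) :
    volume (convexHull ℝ (Set.range p)) =
      (2 / 5 : ℝ≥0∞) *
        volume ((2⁻¹ : ℝ) •
          (convexHull ℝ (Set.range p) - convexHull ℝ (Set.range p))) ∧
    (∀ (H : AffineSubspace ℝ (EuclideanSpace ℝ (Fin 3))),
      Module.finrank ℝ H.direction = 2 →
      ∀ (K : Set (EuclideanSpace ℝ (Fin 3))), IsCompact K → Convex ℝ K →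
        K ⊆ (H : Set (EuclideanSpace ℝ (Fin 3))) → affineSpan ℝ K = H →
      ∀ (v : EuclideanSpace ℝ (Fin 3)), v ∉ H →
        (2 / 5 : ℝ) ≤
          (volume (convexHull ℝ (K ∪ {v}))).toReal /
            (volume ((2⁻¹ : ℝ) •
              (convexHull ℝ (K ∪ {v}) - convexHull ℝ (K ∪ {v})))).toReal) := by
  constructor
  · have htop : affineSpan ℝ (Set.range p) = ⊤ := by
      rw [hp.affineSpan_eq_top_iff_card_eq_finrank_add_one]; simp
    have h := (rs_core ((Set.finite_range p).isCompact_convexHull ℝ) (convex_convexHull ℝ _)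
      (vol_ne_zero htop)).2 (fun x hx => ov_simplex ⟨p, hp, htop⟩ x hx)
    rw [rs_half, ← mul_assoc]
    refine h.trans ?_
    congr 1
    have : (2 / 5 : ℝ≥0∞) = ENNReal.ofReal (2/5) := by
      rw [ENNReal.ofReal_div_of_pos (by norm_num)]; simp
    rw [this, ← ENNReal.ofReal_mul (by norm_num)]
    norm_num
  · intro H hH K hK hKc hKH hKs v hv
    have hne : K.Nonempty := by
      rw [Set.nonempty_iff_ne_empty]
      rintro rfl
      rw [← hKs, AffineSubspace.span_empty, AffineSubspace.direction_bot, finrank_bot] at hH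
      omega
    have htop : affineSpan ℝ (K ∪ {v}) = ⊤ := by
      have hlt : H < affineSpan ℝ (K ∪ {v}) := by
        refine lt_of_le_of_ne (hKs ▸ affineSpan_mono ℝ Set.subset_union_left) ?_
        intro h
        exact hv (h ▸ mem_affineSpan ℝ (Or.inr rfl))
      have h1 := Submodule.finrank_lt_finrank_of_lt
        (AffineSubspace.direction_lt_of_nonempty hlt (hne.mono hKH))
      have h2 := Submodule.finrank_le (affineSpan ℝ (K ∪ {v})).direction
      have h3 : Module.finrank ℝ (EuclideanSpace ℝ (Fin 3)) = 3 := by simp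
      have h4 := Submodule.eq_top_of_finrank_eq (S := (affineSpan ℝ (K ∪ {v})).direction) (by omega)
      exact (AffineSubspace.direction_eq_top_iff_of_nonempty
        ⟨v, mem_affineSpan ℝ (Or.inr rfl)⟩).1 h4
    have hcomp : IsCompact (convexHull ℝ (K ∪ {v})) := by
      have h1 : convexHull ℝ (K ∪ {v}) =
          (fun q : ℝ × E3 => (1 - q.1) • v + q.1 • q.2) '' (Set.Icc 0 1 ×ˢ K) := by
        rw [Set.union_singleton, convexHull_insert hne, hKc.convexHull_eq]
        ext y
        simp only [convexJoin_singleton_left, Set.mem_iUnion, segment_eq_image, Set.mem_image,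
          Set.mem_prod, Prod.exists]
        constructor
        · rintro ⟨k, hk, t, ht, rfl⟩
          exact ⟨t, k, ⟨ht, hk⟩, rfl⟩
        · rintro ⟨t, k, ⟨ht, hk⟩, rfl⟩
          exact ⟨k, hk, t, ht, rfl⟩
      rw [h1]
      exact (isCompact_Icc.prod hK).image (by fun_prop)
    have hV := vol_ne_zero htop
    have h := (rs_core hcomp (convex_convexHull ℝ _) hV).1
    have h' := ENNReal.toReal_mono hcomp.measure_lt_top.ne h
    have hDt := (diff_compact hcomp).measure_lt_top (μ := volume)
    have hDpos : volume (convexHull ℝ (K ∪ {v}) - convexHull ℝ (K ∪ {v})) ≠ 0 := by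
      obtain ⟨k, hk⟩ := hne
      have hk' : k ∈ convexHull ℝ (K ∪ {v}) := subset_convexHull ℝ _ (Or.inl hk)
      intro h0
      apply hV
      rw [← measure_vadd volume (-k)]
      refine measure_mono_null ?_ h0
      rintro _ ⟨y, hy, rfl⟩
      refine ⟨y, hy, k, hk', ?_⟩
      simp only [vadd_eq_add]; abel
    have hDp := ENNReal.toReal_pos hDpos hDt.ne
    rw [rs_half, ENNReal.toReal_mul, ENNReal.toReal_ofReal (by norm_num), le_div_iff₀ (by positivity)]
    rw [ENNReal.toReal_mul, ENNReal.toReal_ofReal (by norm_num)] at h'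
    linarith
end

section
/- A family of translates {K + vᵢ} of a convex body K in ℝ^d is a packing (pairwise disjoint interiors) if and only if the family {DK + vᵢ} of translates of the difference body DK = (1/2)(K - K) is a packing. -/
open MeasureTheory Pointwise

lemma interior_sub_self_eq {E : Type*} [NormedAddCommGroup E] [NormedSpace ℝ E] {L : Set E}
    (hL : Convex ℝ L) (hi : (interior L).Nonempty) :
    interior (L - L) = interior L - interior L := by
  have hopen : IsOpen (interior L - interior L) := isOpen_interior.sub_right
  have hne : (interior L - interior L).Nonempty := hi.sub hi
  have hconv : Convex ℝ (interior L - interior L) := hL.interior.sub hL.interior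
  apply Set.Subset.antisymm
  · have h1 : L ⊆ closure (interior L) := by
      rw [hL.closure_interior_eq_closure_of_nonempty_interior hi]
      exact subset_closure
    have h2 : L - L ⊆ closure (interior L - interior L) := by
      rintro _ ⟨a, ha, b, hb, rfl⟩
      exact map_mem_closure₂ continuous_sub (h1 ha) (h1 hb)
        (fun x hx y hy => Set.sub_mem_sub hx hy)
    have h3 := hconv.interior_closure_eq_interior_of_nonempty_interior
      (by rwa [hopen.interior_eq])
    rw [hopen.interior_eq] at h3
    rw [← h3]
    exact interior_mono h2
  · exact interior_maximal (Set.sub_subset_sub interior_subset interior_subset) hopen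

lemma disjoint_translates_iff {E : Type*} [NormedAddCommGroup E] [NormedSpace ℝ E] {L : Set E}
    (hL : Convex ℝ L) (hi : (interior L).Nonempty) (u w : E) :
    Disjoint (interior (u +ᵥ L)) (interior (w +ᵥ L)) ↔ w - u ∉ interior (L - L) := by
  rw [interior_sub_self_eq hL hi, interior_vadd, interior_vadd, ← not_iff_not, not_not,
    Set.not_disjoint_iff]
  constructor
  · rintro ⟨x, ⟨a, ha, rfl⟩, ⟨b, hb, hab⟩⟩
    refine ⟨a, ha, b, hb, ?_⟩
    simp only [vadd_eq_add] at hab ⊢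
    rw [sub_eq_sub_iff_add_eq_add, add_comm a u, hab]
  · rintro ⟨a, ha, b, hb, hab⟩
    refine ⟨u + a, ⟨a, ha, rfl⟩, ⟨b, hb, ?_⟩⟩
    simp only [vadd_eq_add] at hab ⊢
    rw [sub_eq_sub_iff_add_eq_add] at hab
    rw [add_comm u a, hab]

lemma diffBody_sub_self {E : Type*} [NormedAddCommGroup E] [NormedSpace ℝ E] {K : Set E}
    (hK : Convex ℝ K) :
    (2⁻¹ : ℝ) • (K - K) - (2⁻¹ : ℝ) • (K - K) = K - K := by
  apply Set.Subset.antisymm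
  · rintro _ ⟨_, ⟨_, ⟨a, ha, b, hb, rfl⟩, rfl⟩, _, ⟨_, ⟨c, hc, e, he, rfl⟩, rfl⟩, rfl⟩
    refine ⟨(2⁻¹ : ℝ) • a + (2⁻¹ : ℝ) • e, hK ha he (by norm_num) (by norm_num) (by norm_num),
      (2⁻¹ : ℝ) • b + (2⁻¹ : ℝ) • c, hK hb hc (by norm_num) (by norm_num) (by norm_num), ?_⟩
    simp only []
    module
  · rintro _ ⟨a, ha, b, hb, rfl⟩
    refine ⟨_, ⟨_, ⟨a, ha, b, hb, rfl⟩, rfl⟩, _, ⟨_, ⟨b, hb, a, ha, rfl⟩, rfl⟩, ?_⟩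
    simp only []
    module

/-- A family of translates `{v i +ᵥ K}` of a convex body `K` in `ℝ^d` is a packing
(pairwise disjoint interiors) if and only if the corresponding family of translates
of the difference body `DK = (1/2) • (K - K)` is a packing. -/
theorem packing_iff_diff_body_packing (d : ℕ)
    (K : Set (EuclideanSpace ℝ (Fin d)))
    (hKcompact : IsCompact K) (hKconv : Convex ℝ K)
    (hKint : (interior K).Nonempty)
    {ι : Type*} (v : ι → EuclideanSpace ℝ (Fin d)) :
    (∀ i j, i ≠ j →
        Disjoint (interior (v i +ᵥ K)) (interior (v j +ᵥ K))) ↔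
    (∀ i j, i ≠ j →
        Disjoint (interior (v i +ᵥ (2⁻¹ : ℝ) • (K - K)))
          (interior (v j +ᵥ (2⁻¹ : ℝ) • (K - K)))) := by
  have hD : Convex ℝ ((2⁻¹ : ℝ) • (K - K)) := (hKconv.sub hKconv).smul _
  have hDi : (interior ((2⁻¹ : ℝ) • (K - K))).Nonempty := by
    rw [interior_smul₀ (by norm_num), interior_sub_self_eq hKconv hKint]
    exact (hKint.sub hKint).smul_set
  simp only [disjoint_translates_iff hKconv hKint, disjoint_translates_iff hD hDi,
    diffBody_sub_self hKconv]
end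

section
/- Every centrally symmetric convex disk (2-dimensional convex body symmetric about a point) of area 1 in the plane is contained in a parallelogram of area at most 4/3. -/
open MeasureTheory
open scoped ENNReal

namespace Petty
abbrev E := EuclideanSpace ℝ (Fin 2)

def om (x y : E) : ℝ := x 0 * y 1 - x 1 * y 0

noncomputable def lm (u v : E) : E →ₗ[ℝ] E :=
  Matrix.toLin (EuclideanSpace.basisFun (Fin 2) ℝ).toBasis (EuclideanSpace.basisFun (Fin 2) ℝ).toBasis
    !![u 0, v 0; u 1, v 1]

lemma lm_apply (u v x : E) : lm u v x = x 0 • u + x 1 • v := by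
  ext i
  fin_cases i <;> simp [lm, Matrix.toLin_apply, Matrix.mulVec, dotProduct, Fin.sum_univ_two] <;> ring

lemma lm_det (u v : E) : LinearMap.det (lm u v) = om u v := by
  simp [lm, LinearMap.det_toLin, Matrix.det_fin_two, om]; ring

lemma vol_pre (s : Set (ℝ × ℝ)) (hs : MeasurableSet s) :
    volume {x : E | (x 0, x 1) ∈ s} = volume s := by
  have h := (volume_preserving_finTwoArrow ℝ).comp (PiLp.volume_preserving_ofLp (Fin 2))
  have := h.measure_preimage hs.nullMeasurableSet
  rw [← this]
  congr 1

lemma vol_cube : volume {x : E | |x 0| ≤ 1 ∧ |x 1| ≤ 1} = ENNReal.ofReal 4 := by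
  have : {x : E | |x 0| ≤ 1 ∧ |x 1| ≤ 1} =
      {x : E | (x 0, x 1) ∈ (Set.Icc (-1:ℝ) 1) ×ˢ (Set.Icc (-1:ℝ) 1)} := by
    ext x; simp only [Set.mem_ofPred_eq, Set.mem_prod, Set.mem_Icc, abs_le]
  rw [this, vol_pre _ (measurableSet_Icc.prod measurableSet_Icc), Measure.volume_eq_prod,
    Measure.prod_prod, Real.volume_Icc, ← ENNReal.ofReal_mul (by norm_num)]
  norm_num

lemma vol_tri : volume {x : E | 0 < x 0 ∧ 0 < x 1 ∧ x 0 + x 1 < 1} = ENNReal.ofReal (1/2) := by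
  have : {x : E | 0 < x 0 ∧ 0 < x 1 ∧ x 0 + x 1 < 1} =
      {x : E | (x 0, x 1) ∈ regionBetween (fun _ => (0:ℝ)) (fun t => 1 - t) (Set.Ioo 0 1)} := by
    ext x; simp [regionBetween]
    constructor
    · rintro ⟨h1, h2, h3⟩; refine ⟨⟨h1, ?_⟩, h2, ?_⟩ <;> linarith
    · rintro ⟨⟨h1, h2⟩, h3, h4⟩; refine ⟨h1, h3, ?_⟩; linarith
  rw [this, vol_pre _ (measurableSet_regionBetween measurable_const (by fun_prop) measurableSet_Ioo),
    Measure.volume_eq_prod, volume_regionBetween_eq_integral]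
  · congr 1
    rw [← integral_Ioc_eq_integral_Ioo, ← intervalIntegral.integral_of_le (by norm_num)]
    simp only [Pi.sub_apply, sub_zero]
    rw [intervalIntegral.integral_sub (by simp) (by simp)]
    simp
    norm_num
  · exact integrableOn_const (by simp)
  · exact (Continuous.integrableOn_Icc (by fun_prop)).mono_set Set.Ioo_subset_Icc_self
  · exact measurableSet_Ioo
  · intro x hx; simp; exact hx.2.le

lemma vol_par (u v : E) :
    volume {x : E | ∃ a b : ℝ, |a| ≤ 1 ∧ |b| ≤ 1 ∧ x = (0:E) + a • u + b • v} =
      ENNReal.ofReal (4 * |om u v|) := by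
  have : {x : E | ∃ a b : ℝ, |a| ≤ 1 ∧ |b| ≤ 1 ∧ x = (0:E) + a • u + b • v} =
      lm u v '' {x : E | |x 0| ≤ 1 ∧ |x 1| ≤ 1} := by
    ext x; constructor
    · rintro ⟨a, b, ha, hb, rfl⟩
      exact ⟨!₂[a, b], by simp [ha, hb], by simp [lm_apply]⟩
    · rintro ⟨y, hy, rfl⟩
      exact ⟨y 0, y 1, hy.1, hy.2, by simp [lm_apply]⟩
  rw [this, Measure.addHaar_image_linearMap, vol_cube, lm_det, ← ENNReal.ofReal_mul (abs_nonneg _), mul_comm]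

def cone (a b : E) : Set E := {x | 0 < om a x ∧ 0 < om x b}

lemma tri_le {K : Set E} (hK : Convex ℝ K) (h0 : 0 ∈ K) {a b : E} (ha : a ∈ K) (hb : b ∈ K)
    : ENNReal.ofReal (om a b / 2) ≤ volume (K ∩ cone a b) := by
  rcases le_or_gt (om a b) 0 with hs | hs
  · rw [ENNReal.ofReal_of_nonpos (by linarith)]; exact bot_le
  have : lm a b '' {x : E | 0 < x 0 ∧ 0 < x 1 ∧ x 0 + x 1 < 1} ⊆ K ∩ cone a b := by
    rintro _ ⟨x, ⟨h1, h2, h3⟩, rfl⟩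
    rw [lm_apply]
    refine ⟨?_, ?_, ?_⟩
    · have := hK.sum_mem (t := Finset.univ) (w := ![x 0, x 1, 1 - x 0 - x 1]) (z := ![a, b, 0])
        (by intro i _; fin_cases i <;> simp <;> linarith) (by simp [Fin.sum_univ_three])
        (by intro i _; fin_cases i <;> simp [ha, hb, h0])
      simpa [Fin.sum_univ_three] using this
    · have : om a (x 0 • a + x 1 • b) = x 1 * om a b := by simp [om]; ring
      rw [this]; positivity
    · have : om (x 0 • a + x 1 • b) b = x 0 * om a b := by simp [om]; ring
      rw [this]; positivity
  refine le_trans (le_of_eq ?_) (measure_mono this)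
  rw [Measure.addHaar_image_linearMap, vol_tri, lm_det, ← ENNReal.ofReal_mul (abs_nonneg _),
    abs_of_pos hs]; congr 1; ring

lemma cont_om_left (a : E) : Continuous (fun x => om a x) := by unfold om; fun_prop
lemma cont_om_right (a : E) : Continuous (fun x => om x a) := by unfold om; fun_prop
lemma meas_cone (a b : E) : MeasurableSet (cone a b) :=
  ((isOpen_lt continuous_const (cont_om_left a)).inter
    (isOpen_lt continuous_const (cont_om_right b))).measurableSet

lemma om_expand (x y z : E) : om x y • z = om z y • x + om x z • y := by
  ext i; fin_cases i <;> simp [om] <;> ring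

lemma sector {K : Set E} (hK : Convex ℝ K) (h0 : 0 ∈ K) (hm : MeasurableSet K) {a b w ga gb : E}
    (ha : a ∈ K) (hb : b ∈ K) (hs : 0 < om a b) (hw : w ∈ K) {m : ℝ} (hwm : m ≤ om w (b - a))
    (hga : ∀ x ∈ K, om ga x ≤ 1) (hgb : ∀ x ∈ K, om gb x ≤ 1)
    (hga1 : om ga a = 1) (hgb1 : om gb b = 1) :
    ENNReal.ofReal (m / 2) ≤ volume (K ∩ cone a b) := by
  obtain ⟨α, β, rfl⟩ : ∃ α β : ℝ, w = α • a + β • b := by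
    refine ⟨om w b / om a b, om a w / om a b, ?_⟩
    have := om_expand a b w
    rw [div_eq_inv_mul, div_eq_inv_mul, mul_smul, mul_smul, ← smul_add, ← this, smul_smul,
      inv_mul_cancel₀ hs.ne', one_smul]
  have e1 : om (α • a + β • b) (b - a) = (α + β) * om a b := by simp [om]; ring
  rw [e1] at hwm
  rcases le_or_gt (α + β) 1 with h1 | h1
  · refine le_trans (ENNReal.ofReal_le_ofReal ?_) (tri_le hK h0 ha hb)
    nlinarith
  have hα : 0 ≤ α := by
    by_contra! h
    have h2 := hgb _ hw
    have h3 := hgb _ ha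
    have : om gb (α • a + β • b) = α * om gb a + β * om gb b := by simp [om]; ring
    rw [this, hgb1] at h2
    nlinarith
  have hβ : 0 ≤ β := by
    by_contra! h
    have h2 := hga _ hw
    have h3 := hga _ hb
    have : om ga (α • a + β • b) = α * om ga a + β * om ga b := by simp [om]; ring
    rw [this, hga1] at h2
    nlinarith
  set w := α • a + β • b with hwdef
  have d1 : om a w = β * om a b := by simp [hwdef, om]; ring
  have d2 : om w b = α * om a b := by simp [hwdef, om]; ring
  have key : ∀ x : E, om w x = α * om a x - β * om x b := by intro x; simp [hwdef, om]; ring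
  have anti : ∀ x y : E, om x y = - om y x := by intro x y; simp [om]; ring
  have hdisj : Disjoint (K ∩ cone a w) (K ∩ cone w b) := by
    rw [Set.disjoint_left]
    rintro x ⟨_, _, h⟩ ⟨_, h', _⟩
    rw [anti] at h; linarith
  have hsub : (K ∩ cone a w) ∪ (K ∩ cone w b) ⊆ K ∩ cone a b := by
    rintro x (⟨hx, h, h'⟩ | ⟨hx, h, h'⟩)
    · refine ⟨hx, h, ?_⟩
      rw [anti, key] at h'
      by_contra! h5
      nlinarith [mul_nonneg hα h.le]
    · refine ⟨hx, ?_, h'⟩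
      rw [key] at h
      by_contra! h5
      nlinarith [mul_nonneg hβ h'.le]
  calc ENNReal.ofReal (m / 2) ≤ ENNReal.ofReal (om a w / 2 + om w b / 2) :=
        ENNReal.ofReal_le_ofReal (by rw [d1, d2]; linarith)
    _ ≤ ENNReal.ofReal (om a w / 2) + ENNReal.ofReal (om w b / 2) := ENNReal.ofReal_add_le
    _ ≤ volume (K ∩ cone a w) + volume (K ∩ cone w b) :=
        add_le_add (tri_le hK h0 ha hw) (tri_le hK h0 hw hb)
    _ = volume ((K ∩ cone a w) ∪ (K ∩ cone w b)) :=
        (measure_union hdisj (hm.inter (meas_cone _ _))).symm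
    _ ≤ _ := measure_mono hsub


lemma nhds0 {K : Set E} (hKv : Convex ℝ K) (hKi : (interior K).Nonempty) (hKsym : ∀ x ∈ K, -x ∈ K) :
    K ∈ nhds (0 : E) := by
  obtain ⟨x, hx⟩ := hKi
  have h := hKv.combo_interior_self_mem_interior hx (hKsym x (interior_subset hx))
    (a := 1/2) (b := 1/2) (by norm_num) (by norm_num) (by norm_num)
  simp at h
  exact mem_interior_iff_mem_nhds.1 h

def pol (K : Set E) : Set E := {y | ∀ x ∈ K, om y x ≤ 1}

lemma repr (f : StrongDual ℝ E) : ∃ w : E, ∀ x, f x = om w x := by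
  refine ⟨!₂[f (EuclideanSpace.single 1 1), - f (EuclideanSpace.single 0 1)], fun x => ?_⟩
  have : x = x 0 • EuclideanSpace.single 0 (1:ℝ) + x 1 • EuclideanSpace.single 1 (1:ℝ) := by
    ext i; fin_cases i <;> simp
  conv_lhs => rw [this]
  simp [om]; ring

lemma om_smul_left (c : ℝ) (x y : E) : om (c • x) y = c * om x y := by simp [om]; ring
lemma om_smul_right (c : ℝ) (x y : E) : om x (c • y) = c * om x y := by simp [om]; ring
lemma om_neg_left (x y : E) : om (-x) y = - om x y := by simp [om]; ring
lemma om_neg_right (x y : E) : om x (-y) = - om x y := by simp [om]; ring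
lemma om_anti (x y : E) : om x y = - om y x := by simp [om]; ring

lemma support {K : Set E} (hKv : Convex ℝ K) (h0 : K ∈ nhds (0 : E)) {v : E}
    (hv : gauge K v = 1) : ∃ w ∈ pol K, om w v = 1 := by
  have hvi : v ∉ interior K := by
    rw [← gauge_lt_one_iff_mem_interior hKv h0, hv]; simp
  have h0i : (0:E) ∈ interior K := mem_interior_iff_mem_nhds.2 h0
  obtain ⟨f, hf⟩ := geometric_hahn_banach_open_point hKv.interior isOpen_interior hvi
  obtain ⟨w, hw⟩ := repr f
  have hpos : 0 < om w v := by rw [← hw]; simpa using hf 0 h0i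
  have hle : ∀ x ∈ K, om w x ≤ om w v := by
    intro x hx
    have hx' : x ∈ closure (interior K) := by
      rw [hKv.closure_interior_eq_closure_of_nonempty_interior ⟨0, h0i⟩]; exact subset_closure hx
    refine le_on_closure (f := fun x => om w x) (g := fun _ => om w v) (fun y hy => ?_)
      (cont_om_left w).continuousOn continuous_const.continuousOn hx'
    simp only [← hw]; exact (hf y hy).le
  refine ⟨(om w v)⁻¹ • w, fun x hx => ?_, ?_⟩
  · rw [om_smul_left, inv_mul_le_iff₀ hpos, mul_one]; exact hle x hx
  · rw [om_smul_left, inv_mul_cancel₀ hpos.ne']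

lemma bipolar {K : Set E} (hKv : Convex ℝ K) (hc : IsClosed K) (h0 : (0:E) ∈ K) {x : E}
    (hx : ∀ z ∈ pol K, om z x ≤ 1) : x ∈ K := by
  by_contra hxK
  obtain ⟨f, u, h1, h2⟩ := geometric_hahn_banach_closed_point hKv hc hxK
  obtain ⟨w, hw⟩ := repr f
  have hu : 0 < u := by simpa using h1 0 h0
  have := hx (u⁻¹ • w) (fun y hy => by
    rw [om_smul_left, inv_mul_le_iff₀ hu, mul_one, ← hw]; exact (h1 y hy).le)
  rw [om_smul_left, inv_mul_le_iff₀ hu, mul_one, ← hw] at this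
  linarith

lemma pol_compact {K : Set E} (h0 : K ∈ nhds (0 : E)) : IsCompact (pol K) := by
  obtain ⟨r, hr, hrK⟩ := Metric.nhds_basis_closedBall.mem_iff.1 h0
  refine Metric.isCompact_of_isClosed_isBounded ?_ ?_
  · have : pol K = ⋂ x ∈ K, {y | om y x ≤ 1} := by ext; simp [pol]
    rw [this]
    exact isClosed_biInter fun x _ => isClosed_le (cont_om_right x) continuous_const
  · refine (Metric.isBounded_closedBall (x := (0:E)) (r := 2 / r)).subset fun y hy => ?_
    have hb : ∀ s : ℝ, |s| = 1 → ∀ i : Fin 2, om y ((s * r) • EuclideanSpace.single i (1:ℝ)) ≤ 1 := by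
      intro s hs i
      apply hy; apply hrK
      simp [norm_smul, hs, abs_of_pos hr]
    have a1 := hb 1 (by simp) 0
    have a2 := hb (-1) (by simp) 0
    have a3 := hb 1 (by simp) 1
    have a4 := hb (-1) (by simp) 1
    simp [om] at a1 a2 a3 a4
    have b0 : |y 0| ≤ 1 / r := by rw [le_div_iff₀ hr, ← abs_of_pos hr, ← abs_mul, abs_le]; constructor <;> linarith
    have b1 : |y 1| ≤ 1 / r := by rw [le_div_iff₀ hr, ← abs_of_pos hr, ← abs_mul, abs_le]; constructor <;> linarith
    have hrp : 0 < 1 / r := by positivity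
    rw [mem_closedBall_zero_iff, EuclideanSpace.norm_eq, Real.sqrt_le_iff]
    refine ⟨by positivity, ?_⟩
    simp only [Fin.sum_univ_two, Real.norm_eq_abs]
    have : 2 / r = 2 * (1 / r) := by ring
    rw [this]
    nlinarith [abs_nonneg (y 0), abs_nonneg (y 1)]

lemma hexagon {K : Set E} (hKc : IsCompact K) (hKv : Convex ℝ K) (h0 : K ∈ nhds (0 : E))
    (hKsym : ∀ x ∈ K, -x ∈ K) :
    ∃ a b : E, gauge K a = 1 ∧ gauge K b = 1 ∧ gauge K (b - a) = 1 ∧ 0 < om a b := by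
  have hcont := continuous_gauge hKv h0
  have habs : Absorbent ℝ K := absorbent_nhds_zero h0
  have hvb : Bornology.IsVonNBounded ℝ K := (NormedSpace.isVonNBounded_iff ℝ).2 hKc.isBounded
  have hpos : ∀ x : E, x ≠ 0 → 0 < gauge K x := fun x hx => (gauge_pos habs hvb).2 hx
  let e0 : E := !₂[1, 0]
  let x : ℝ → E := fun t => !₂[Real.cos t, Real.sin t]
  have hxc : Continuous x := by
    refine (PiLp.continuous_toLp 2 _).comp (continuous_pi fun i => ?_)
    fin_cases i <;> simp <;> fun_prop
  have hx0 : ∀ t, x t ≠ 0 := by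
    intro t h
    have h1 : x t 0 = 0 := by rw [h]; rfl
    have h2 : x t 1 = 0 := by rw [h]; rfl
    simp [x] at h1 h2
    have := Real.sin_sq_add_cos_sq t
    rw [h1, h2] at this; norm_num at this
  let y : ℝ → E := fun t => (gauge K (x t))⁻¹ • x t
  have hyc : Continuous y := ((hcont.comp hxc).inv₀ fun t => (hpos _ (hx0 t)).ne').smul hxc
  have hy1 : ∀ t, gauge K (y t) = 1 := by
    intro t
    have := hpos _ (hx0 t)
    simp only [y]
    rw [gauge_smul_of_nonneg (by positivity), smul_eq_mul, inv_mul_cancel₀ this.ne']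
  have hypi : y Real.pi = - y 0 := by
    have : x Real.pi = - x 0 := by ext i; fin_cases i <;> simp [x]
    simp only [y, this]
    rw [gauge_neg hKsym, smul_neg]
  have hmem : (1:ℝ) ∈ Set.Icc (gauge K (y 0 - y 0)) (gauge K (y Real.pi - y 0)) := by
    rw [hypi]
    have : - y 0 - y 0 = (-2 : ℝ) • y 0 := by module
    rw [this, show (-2:ℝ) • y 0 = -((2:ℝ) • y 0) by module, gauge_neg hKsym,
      gauge_smul_of_nonneg (by norm_num), hy1]
    simp
  obtain ⟨t, ht, hgt⟩ := intermediate_value_Icc (f := fun t => gauge K (y t - y 0)) Real.pi_pos.le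
    (hcont.comp (hyc.sub continuous_const)).continuousOn hmem
  refine ⟨y 0, y t, hy1 0, hy1 t, hgt, ?_⟩
  have ht0 : t ≠ 0 := by rintro rfl; simp at hgt
  have htpi : t ≠ Real.pi := by
    rintro rfl
    simp only [hypi] at hgt
    rw [show - y 0 - y 0 = -((2:ℝ) • y 0) by module, gauge_neg hKsym,
      gauge_smul_of_nonneg (by norm_num), hy1] at hgt
    norm_num at hgt
  have hsin : 0 < Real.sin t := Real.sin_pos_of_pos_of_lt_pi (lt_of_le_of_ne ht.1 ht0.symm)
    (lt_of_le_of_ne ht.2 htpi)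
  have : om (y 0) (y t) = (gauge K (x 0))⁻¹ * ((gauge K (x t))⁻¹ * Real.sin t) := by
    simp only [y]; rw [om_smul_left, om_smul_right]; simp [om, x]
  rw [this]
  have := hpos _ (hx0 t)
  have := hpos _ (hx0 0)
  positivity

lemma area_ge {K : Set E} (hKc : IsCompact K) (hKv : Convex ℝ K) (h0 : K ∈ nhds (0 : E))
    (hKsym : ∀ x ∈ K, -x ∈ K) {m : ℝ} (hm : 0 ≤ m) (hmK : ∀ w ∈ pol K, m • w ∈ K) :
    ENNReal.ofReal (3 * m) ≤ volume K := by
  obtain ⟨a, b, ha, hb, hc, hab⟩ := hexagon hKc hKv h0 hKsym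
  have h00 : (0:E) ∈ K := mem_of_mem_nhds h0
  have hmeas := hKc.isClosed.measurableSet
  have hmem : ∀ x : E, gauge K x = 1 → x ∈ K := fun x hx => by
    have := (gauge_le_one_iff_mem_closure hKv h0).1 hx.le
    rwa [hKc.isClosed.closure_eq] at this
  obtain ⟨wa, hwa, hwa1⟩ := support hKv h0 ha
  obtain ⟨wb, hwb, hwb1⟩ := support hKv h0 hb
  obtain ⟨wc, hwc, hwc1⟩ := support hKv h0 hc
  have polneg : ∀ w ∈ pol K, -w ∈ pol K := fun w hw x hx => by
    have := hw _ (hKsym x hx)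
    rw [om_neg_right] at this; rwa [om_neg_left]
  have haK := hmem a ha
  have hbK := hmem b hb
  have hcK := hmem _ hc
  have e1 : om b (b - a) = om a b := by simp [om]; ring
  have e2 : om (b - a) (-a) = om a b := by simp [om]; ring
  have s1 := sector hKv h00 hmeas haK hbK hab (hmK _ hwc) (m := m)
    (by rw [om_smul_left, hwc1, mul_one]) hwa hwb hwa1 hwb1
  have s2 := sector hKv h00 hmeas hbK hcK (by rw [e1]; exact hab) (hKsym _ (hmK _ hwa)) (m := m)
    (by rw [show b - a - b = -a by abel, om_neg_left, om_neg_right, om_smul_left, hwa1]; simp)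
    hwb hwc hwb1 hwc1
  have s3 := sector hKv h00 hmeas hcK (hKsym _ haK) (by rw [e2]; exact hab)
    (hKsym _ (hmK _ hwb)) (m := m)
    (by rw [show -a - (b - a) = -b by abel, om_neg_left, om_neg_right, om_smul_left, hwb1]; simp)
    hwc (polneg _ hwa) hwc1 (by rw [om_neg_left, om_neg_right, hwa1]; simp)
  set S1 := K ∩ cone a b
  set S2 := K ∩ cone b (b - a)
  set S3 := K ∩ cone (b - a) (-a)
  have L2 : ∀ x, om (b - a) x = om b x - om a x := by intro x; simp [om]; ring
  have m1 : MeasurableSet S1 := hmeas.inter (meas_cone _ _)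
  have m2 : MeasurableSet S2 := hmeas.inter (meas_cone _ _)
  have m3 : MeasurableSet S3 := hmeas.inter (meas_cone _ _)
  have p1 : ∀ x ∈ S1, 0 < om a x ∧ om b x < 0 := by
    rintro x ⟨_, h1, h2⟩; rw [om_anti] at h2; exact ⟨h1, by linarith⟩
  have p2 : ∀ x ∈ S2, 0 < om b x ∧ om b x < om a x := by
    rintro x ⟨_, h1, h2⟩; rw [om_anti, L2] at h2; exact ⟨h1, by linarith⟩
  have p3 : ∀ x ∈ S3, 0 < om a x ∧ om a x < om b x := by
    rintro x ⟨_, h1, h2⟩; rw [om_anti, om_neg_left] at h2; rw [L2] at h1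
    exact ⟨by linarith, by linarith⟩
  have d12 : Disjoint S1 S2 := Set.disjoint_left.2 fun x h h' => by
    have := p1 x h; have := p2 x h'; linarith
  have d123 : Disjoint (S1 ∪ S2) S3 := Set.disjoint_left.2 fun x h h' => by
    have q := p3 x h'
    rcases h with h | h
    · have := p1 x h; linarith
    · have := p2 x h; linarith
  set U := S1 ∪ S2 ∪ S3
  have hUpos : ∀ x ∈ U, 0 < om a x := by
    rintro x ((h | h) | h)
    · exact (p1 x h).1
    · have := p2 x h; linarith
    · exact (p3 x h).1
  have hUK : U ⊆ K := by
    rintro x ((h | h) | h) <;> exact h.1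
  have mU : MeasurableSet U := (m1.union m2).union m3
  have hU : ENNReal.ofReal (3 * m / 2) ≤ volume U := by
    rw [measure_union d123 m3, measure_union d12 m2]
    have : 3 * m / 2 = m / 2 + m / 2 + m / 2 := by ring
    rw [this, ENNReal.ofReal_add (by positivity) (by positivity),
      ENNReal.ofReal_add (by positivity) (by positivity)]
    exact add_le_add (add_le_add s1 s2) s3
  have hUneg : volume (-U) = volume U := Measure.measure_neg volume U
  have dU : Disjoint U (-U) := Set.disjoint_left.2 fun x h h' => by
    have h1 := hUpos x h
    have h2 := hUpos (-x) h'
    rw [om_neg_right] at h2; linarith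
  calc ENNReal.ofReal (3 * m) = ENNReal.ofReal (3 * m / 2) + ENNReal.ofReal (3 * m / 2) := by
        rw [← ENNReal.ofReal_add (by positivity) (by positivity)]; congr 1; ring
    _ ≤ volume U + volume (-U) := by rw [hUneg]; exact add_le_add hU hU
    _ = volume (U ∪ -U) := (measure_union dU mU.neg).symm
    _ ≤ volume K := measure_mono (Set.union_subset hUK fun x hx => by
        have := hKsym _ (hUK hx); simpa using this)

end Petty

open Petty

/-- Petty's theorem: every centrally symmetric convex disk of area `1` in the plane
(a compact convex set `K ⊆ ℝ²` with nonempty interior and `K = -K`) is contained in a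
parallelogram of area at most `4/3`. -/
theorem symmetric_disk_in_parallelogram
    (K : Set (EuclideanSpace ℝ (Fin 2)))
    (hKc : IsCompact K) (hKv : Convex ℝ K) (hKi : (interior K).Nonempty)
    (hKsym : K = -K) (hKarea : volume K = 1) :
    ∃ (c u v : EuclideanSpace ℝ (Fin 2)), LinearIndependent ℝ ![u, v] ∧
      K ⊆ {x | ∃ a b : ℝ, |a| ≤ 1 ∧ |b| ≤ 1 ∧ x = c + a • u + b • v} ∧
      volume {x | ∃ a b : ℝ, |a| ≤ 1 ∧ |b| ≤ 1 ∧ x = c + a • u + b • v} ≤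
        ENNReal.ofReal (4 / 3) := by
  have hsym : ∀ x ∈ K, -x ∈ K := by
    intro x hx; rw [hKsym]; simpa using hx
  have h0 := nhds0 hKv hKi hsym
  have h00 : (0:E) ∈ K := mem_of_mem_nhds h0
  have hpc := pol_compact h0
  have hp0 : (0:E) ∈ pol K := fun x _ => by simp [om]
  obtain ⟨⟨f, g⟩, ⟨hf, hg⟩, hmax⟩ := (hpc.prod hpc).exists_isMaxOn ⟨(0, 0), hp0, hp0⟩
    (f := fun p : E × E => om p.1 p.2) (by unfold om; fun_prop)
  have hmax' : ∀ y ∈ pol K, ∀ z ∈ pol K, om y z ≤ om f g := fun y hy z hz =>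
    hmax (Set.mk_mem_prod hy hz)
  have hM0 : 0 ≤ om f g := by simpa [om] using hmax' 0 hp0 0 hp0
  have hscale : ∀ M : ℝ, 0 < M → om f g ≤ M → ∀ w ∈ pol K, M⁻¹ • w ∈ K := by
    intro M hM hle w hw
    refine bipolar hKv hKc.isClosed h00 fun z hz => ?_
    rw [om_smul_right, inv_mul_le_iff₀ hM, mul_one]
    exact (hmax' z hz w hw).trans hle
  have harea : ∀ M : ℝ, 0 < M → om f g ≤ M → 3 ≤ M := by
    intro M hM hle
    have := area_ge hKc hKv h0 hsym (inv_nonneg.2 hM.le) (hscale M hM hle)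
    rw [hKarea, ENNReal.ofReal_le_one, ← div_eq_mul_inv, div_le_one hM] at this
    exact this
  have hM : 3 ≤ om f g := by
    rcases hM0.eq_or_lt with h | h
    · have := harea 1 one_pos (by linarith); norm_num at this
    · exact harea _ h le_rfl
  have hMpos : 0 < om f g := by linarith
  have hpabs : ∀ w ∈ pol K, ∀ x ∈ K, |om w x| ≤ 1 := by
    intro w hw x hx
    have h1 := hw x hx
    have h2 := hw _ (hsym x hx)
    rw [om_neg_right] at h2
    rw [abs_le]; constructor <;> linarith
  have hdet : om ((om f g)⁻¹ • g) f = -1 := by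
    rw [om_smul_left, om_anti g f]; field_simp
  refine ⟨0, (om f g)⁻¹ • g, (om f g)⁻¹ • f, ?_, ?_, ?_⟩
  · rw [LinearIndependent.pair_iff]
    intro s t hst
    have h1 := congrArg (fun x => om f x) hst
    have h2 := congrArg (fun x => om g x) hst
    have e1 : om f (s • (om f g)⁻¹ • g + t • (om f g)⁻¹ • f) = s * ((om f g)⁻¹ * om f g) := by
      generalize (om f g)⁻¹ = c
      simp [om]; ring
    have e2 : om g (s • (om f g)⁻¹ • g + t • (om f g)⁻¹ • f) = - (t * ((om f g)⁻¹ * om f g)) := by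
      generalize (om f g)⁻¹ = c
      simp [om]; ring
    have z : ∀ x : E, om x 0 = 0 := by intro x; simp [om]
    simp only [e1, e2, z, inv_mul_cancel₀ hMpos.ne'] at h1 h2
    constructor <;> linarith
  · intro x hx
    refine ⟨om f x, - om g x, hpabs f hf x hx, by rw [abs_neg]; exact hpabs g hg x hx, ?_⟩
    have h := om_expand f g x
    rw [om_anti x g] at h
    have : x = (om f g)⁻¹ • (om f g • x) := by rw [smul_smul, inv_mul_cancel₀ hMpos.ne', one_smul]
    rw [h] at this
    refine this.trans ?_
    module
  · rw [vol_par]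
    refine ENNReal.ofReal_le_ofReal ?_
    rw [om_smul_right, hdet, mul_neg_one, abs_neg, abs_of_pos (inv_pos.2 hMpos),
      ← div_eq_mul_inv]
    exact div_le_div_of_nonneg_left (by norm_num) (by norm_num) hM
end

section
/- Every centrally symmetric convex hexagon H is contained in a parallelogram P whose area is at most 4/3 times the area of H, where the sides of P lie on lines extending sides of H. -/
open MeasureTheory
open scoped ENNReal


abbrev E2 := EuclideanSpace ℝ (Fin 2)

def cr (x y : E2) : ℝ := x 0 * y 1 - x 1 * y 0

lemma supp_fun (S : Set E2) (hS : Convex ℝ S) (x : E2) (hxS : x ∈ S) (hx : x ∉ interior S) :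
    ∃ f : E2 →ₗ[ℝ] ℝ, f ≠ 0 ∧ ∀ y ∈ S, f y ≤ f x := by
  by_cases h : (interior S).Nonempty
  · obtain ⟨f, hf⟩ := geometric_hahn_banach_open_point hS.interior isOpen_interior hx
    refine ⟨f.toLinearMap, ?_, ?_⟩
    · obtain ⟨z, hz⟩ := h
      intro h0
      have h1 := hf z hz
      have h2 : ∀ w, f w = 0 := fun w => by
        have := congrArg (fun g => g w) h0
        simpa using this
      rw [h2, h2] at h1
      exact lt_irrefl _ h1
    · intro y hy
      have hy' : y ∈ closure (interior S) := by
        rw [hS.closure_interior_eq_closure_of_nonempty_interior h]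
        exact subset_closure hy
      have hc : IsClosed {w : E2 | f w ≤ f x} := isClosed_le f.continuous continuous_const
      exact closure_minimal (fun w hw => (hf w hw).le) hc hy'
  · rw [hS.interior_nonempty_iff_affineSpan_eq_top] at h
    have h' : (affineSpan ℝ S).direction < ⊤ := by
      rw [lt_top_iff_ne_top]
      intro h2
      exact h ((AffineSubspace.direction_eq_top_iff_of_nonempty ⟨x, subset_affineSpan ℝ S hxS⟩).1 h2)
    obtain ⟨f, hf0, hf⟩ := Submodule.exists_le_ker_of_lt_top _ h'
    refine ⟨f, hf0, fun y hy => ?_⟩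
    have := hf (AffineSubspace.vsub_mem_direction (subset_affineSpan ℝ S hy) (subset_affineSpan ℝ S hxS))
    have h3 : f (y - x) = 0 := this
    rw [map_sub] at h3
    linarith

lemma fun_coord (f : E2 →ₗ[ℝ] ℝ) : ∃ s t : ℝ, ∀ x, f x = s * x 0 + t * x 1 := by
  refine ⟨f (EuclideanSpace.single 0 1), f (EuclideanSpace.single 1 1), fun x => ?_⟩
  have : x = x 0 • EuclideanSpace.single 0 1 + x 1 • EuclideanSpace.single 1 1 := by
    ext i; fin_cases i <;> simp
  conv_lhs => rw [this]
  simp [mul_comm]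

lemma not_collinear (p : Fin 6 → E2) (hvert : ∀ i, p i ∉ convexHull ℝ (p '' {j | j ≠ i}))
    (i j k : Fin 6) (hij : i ≠ j) (hik : i ≠ k) (hjk : j ≠ k) : cr (p j - p i) (p k - p i) ≠ 0 := by
  intro h
  have key : ∀ a b c : Fin 6, b ≠ a → b ≠ c → ¬ Wbtw ℝ (p a) (p b) (p c) := by
    intro a b c hba hbc hw
    apply hvert b
    have h1 : p b ∈ segment ℝ (p a) (p c) := by
      rw [← mem_segment_iff_wbtw] at hw; exact hw
    exact (convex_convexHull ℝ _).segment_subset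
      (subset_convexHull ℝ _ (Set.mem_image_of_mem p hba.symm))
      (subset_convexHull ℝ _ (Set.mem_image_of_mem p hbc.symm)) h1
  have hne : p j ≠ p i := by
    intro h2
    apply hvert j
    rw [h2]
    exact subset_convexHull ℝ _ ⟨i, hij, rfl⟩
  have hn : (p j - p i) 0 ^ 2 + (p j - p i) 1 ^ 2 ≠ 0 := by
    intro h0
    apply hne
    have h1 : (p j - p i) 0 = 0 := by nlinarith [sq_nonneg ((p j - p i) 0), sq_nonneg ((p j - p i) 1)]
    have h2 : (p j - p i) 1 = 0 := by nlinarith [sq_nonneg ((p j - p i) 0), sq_nonneg ((p j - p i) 1)]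
    rw [← sub_eq_zero]
    ext m; fin_cases m
    · simpa using h1
    · simpa using h2
  have hcol : Collinear ℝ ({p i, p j, p k} : Set E2) := by
    rw [collinear_iff_of_mem (p₀ := p i) (by simp)]
    refine ⟨p j - p i, ?_⟩
    intro q hq
    rcases hq with rfl | rfl | rfl
    · exact ⟨0, by simp⟩
    · exact ⟨1, by simp⟩
    · refine ⟨((p j - p i) 0 * (p k - p i) 0 + (p j - p i) 1 * (p k - p i) 1) /
        ((p j - p i) 0 ^ 2 + (p j - p i) 1 ^ 2), ?_⟩
      unfold cr at h
      generalize hw : p k - p i = w at *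
      generalize p j - p i = e at *
      have : p k = w + p i := by rw [← hw]; abel
      rw [this, vadd_eq_add]
      congr 1
      ext m; fin_cases m
      · simp; field_simp; linear_combination -(e 1) * h
      · simp; field_simp; linear_combination (e 0) * h
  rcases hcol.wbtw_or_wbtw_or_wbtw with h | h | h
  · exact key _ _ _ hij.symm hjk h
  · exact key _ _ _ hjk.symm hik.symm h
  · exact key _ _ _ hik hij h

lemma edge_sign (p : Fin 6 → E2) (hvert : ∀ i, p i ∉ convexHull ℝ (p '' {j | j ≠ i}))
    (hcyc : ∀ i, segment ℝ (p i) (p (i + 1)) ⊆ frontier (convexHull ℝ (Set.range p)))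
    (i j k : Fin 6) (hj : j ≠ i) (hj' : j ≠ i + 1) (hk : k ≠ i) (hk' : k ≠ i + 1) :
    0 < cr (p (i+1) - p i) (p j - p i) * cr (p (i+1) - p i) (p k - p i) := by
  have hi1 : i ≠ i + 1 := by simp
  have hm : midpoint ℝ (p i) (p (i+1)) ∈ segment ℝ (p i) (p (i+1)) := midpoint_mem_segment _ _
  have hin : ∀ j, p j ∈ convexHull ℝ (Set.range p) := fun j => subset_convexHull ℝ _ ⟨j, rfl⟩
  have hmS := (convex_convexHull ℝ (Set.range p)).segment_subset (hin i) (hin (i+1)) hm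
  obtain ⟨f, hf0, hf⟩ := supp_fun _ (convex_convexHull ℝ (Set.range p)) _ hmS (hcyc i hm).2
  have hmid : f (midpoint ℝ (p i) (p (i+1))) = (f (p i) + f (p (i+1))) / 2 := by
    rw [midpoint_eq_smul_add]; simp; ring
  have h1 := hf _ (hin i)
  have h2 := hf _ (hin (i+1))
  have h3 := hf _ (hin j)
  have h4 := hf _ (hin k)
  rw [hmid] at h1 h2 h3 h4
  have nj := not_collinear p hvert i (i+1) j hi1 hj.symm hj'.symm
  have nk := not_collinear p hvert i (i+1) k hi1 hk.symm hk'.symm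
  obtain ⟨s, t, hst⟩ := fun_coord f
  have g0 : f (p (i+1) - p i) = 0 := by rw [map_sub]; linarith
  have g1 : f (p j - p i) ≤ 0 := by rw [map_sub]; linarith
  have g2 : f (p k - p i) ≤ 0 := by rw [map_sub]; linarith
  rw [hst] at g0 g1 g2
  have hst0 : 0 < s^2 + t^2 := by
    by_contra hc
    have hs : s = 0 := by nlinarith [sq_nonneg s, sq_nonneg t]
    have ht : t = 0 := by nlinarith [sq_nonneg s, sq_nonneg t]
    apply hf0; ext x; simp [hst, hs, ht]
  generalize p (i+1) - p i = e at *
  generalize p j - p i = x at *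
  generalize p k - p i = y at *
  have : 0 ≤ cr e x * cr e y := by
    have hh : (s^2+t^2)^2 * (cr e x * cr e y) =
      (s * e 1 - t * e 0)^2 * ((s * x 0 + t * x 1) * (s * y 0 + t * y 1)) := by
      have hx : (s^2+t^2) * cr e x = -(s * e 1 - t * e 0) * (s * x 0 + t * x 1) := by
        unfold cr; linear_combination (s * x 1 - t * x 0) * g0
      have hy : (s^2+t^2) * cr e y = -(s * e 1 - t * e 0) * (s * y 0 + t * y 1) := by
        unfold cr; linear_combination (s * y 1 - t * y 0) * g0
      calc _ = ((s^2+t^2) * cr e x) * ((s^2+t^2) * cr e y) := by ring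
        _ = _ := by rw [hx, hy]; ring
    have h5 := mul_nonneg (sq_nonneg (s * e 1 - t * e 0)) (mul_nonneg_of_nonpos_of_nonpos g1 g2)
    rw [← hh] at h5
    exact nonneg_of_mul_nonneg_right h5 (by positivity)
  exact lt_of_le_of_ne this (mul_ne_zero nj nk).symm

lemma vol_sq : (volume : Measure (ℝ × ℝ)) (Set.Icc (-1) 1 ×ˢ Set.Icc (-1) 1) = 4 := by
  rw [Measure.volume_eq_prod, Measure.prod_prod, Real.volume_Icc,
    ← ENNReal.ofReal_mul (by norm_num)]
  norm_num

lemma vol_hex : (volume : Measure (ℝ × ℝ))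
    {x | |x.1| ≤ 1 ∧ |x.2| ≤ 1 ∧ |x.1 + x.2| ≤ 1} ≥ 3 := by
  have h := volume_regionBetween_eq_integral (μ := (volume : Measure ℝ))
    (f := fun s => max (-1) (-1 - s)) (g := fun s => min 1 (1 - s)) (s := Set.Ioc (-1) 1)
    (Continuous.integrableOn_Ioc (by fun_prop)) (Continuous.integrableOn_Ioc (by fun_prop))
    measurableSet_Ioc (by
      intro x hx
      obtain ⟨h1, h2⟩ := hx
      simp only [max_le_iff, le_min_iff]
      refine ⟨⟨?_, ?_⟩, ?_, ?_⟩ <;> linarith)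
  have hI : ∫ y in Set.Ioc (-1:ℝ) 1, ((fun s : ℝ => min (1:ℝ) (1 - s)) - (fun s : ℝ => max (-1) (-1 - s))) y = 3 := by
    rw [← intervalIntegral.integral_of_le (by norm_num)]
    have hc : Continuous ((fun s : ℝ => min 1 (1 - s)) - (fun s : ℝ => max (-1) (-1 - s))) := by fun_prop
    rw [← intervalIntegral.integral_add_adjacent_intervals (b := 0) (hc.intervalIntegrable _ _) (hc.intervalIntegrable _ _)]
    have h1 : ∫ y in (-1:ℝ)..0, ((fun s : ℝ => min (1:ℝ) (1 - s)) - (fun s : ℝ => max (-1) (-1 - s))) y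
        = ∫ y in (-1:ℝ)..0, (2 + y) := by
      apply intervalIntegral.integral_congr
      intro y hy
      rw [Set.uIcc_of_le (by norm_num)] at hy
      simp only [Pi.sub_apply]
      rw [min_eq_left (by linarith [hy.2]), max_eq_right (by linarith [hy.2])]; ring
    have h2 : ∫ y in (0:ℝ)..1, ((fun s : ℝ => min (1:ℝ) (1 - s)) - (fun s : ℝ => max (-1) (-1 - s))) y
        = ∫ y in (0:ℝ)..1, (2 - y) := by
      apply intervalIntegral.integral_congr
      intro y hy
      rw [Set.uIcc_of_le (by norm_num)] at hy
      simp only [Pi.sub_apply]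
      rw [min_eq_right (by linarith [hy.1]), max_eq_left (by linarith [hy.1])]; ring
    rw [h1, h2, intervalIntegral.integral_add (by simp) (by simp), intervalIntegral.integral_sub (by simp) (by simp)]
    norm_num
  rw [hI] at h
  have h3 : ENNReal.ofReal 3 = 3 := by norm_num
  rw [ge_iff_le, ← h3, ← h, ← Measure.volume_eq_prod]
  apply measure_mono
  rintro ⟨x, y⟩ ⟨⟨h1, h2⟩, h3, h4⟩
  simp only [max_lt_iff, lt_min_iff] at h1 h2 h3 h4
  simp only [Set.mem_ofPred_eq, abs_le]
  refine ⟨⟨?_, ?_⟩, ⟨?_, ?_⟩, ?_, ?_⟩ <;> linarith [h3.1, h3.2, h4.1, h4.2]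

lemma core_vol (u v c : E2) (huv : LinearIndependent ℝ ![u, v]) (S : Set E2) (hS : Convex ℝ S)
    (h1 : c + u ∈ S) (h2 : c - u ∈ S) (h3 : c + v ∈ S) (h4 : c - v ∈ S)
    (h5 : c + (u - v) ∈ S) (h6 : c - (u - v) ∈ S) :
    volume {x | ∃ a b : ℝ, |a| ≤ 1 ∧ |b| ≤ 1 ∧ x = c + a • u + b • v} ≤
        (ENNReal.ofReal (4 / 3)) * volume S := by
  let f : (ℝ × ℝ) →ₗ[ℝ] E2 :=
    (LinearMap.fst ℝ ℝ ℝ).smulRight u + (LinearMap.snd ℝ ℝ ℝ).smulRight v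
  have hf : ∀ x, f x = x.1 • u + x.2 • v := fun x => rfl
  have hinj : Function.Injective f := by
    rw [← LinearMap.ker_eq_bot, LinearMap.ker_eq_bot']
    intro x hx
    rw [hf] at hx
    have := LinearIndependent.pair_iff.1 huv _ _ hx
    exact Prod.ext this.1 this.2
  let L : (ℝ × ℝ) ≃L[ℝ] E2 :=
    (LinearEquiv.ofInjectiveOfFinrankEq f hinj (by simp)).toContinuousLinearEquiv
  have hL : ∀ x, L x = x.1 • u + x.2 • v := fun x => rfl
  let μ : Measure (ℝ × ℝ) := Measure.map L.symm (volume : Measure E2)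
  obtain ⟨k, hk⟩ : ∃ k : ℝ≥0∞, μ = k • (volume : Measure (ℝ × ℝ)) :=
    ⟨_, Measure.isAddLeftInvariant_eq_smul μ volume⟩
  have hvol : ∀ T : Set (ℝ × ℝ), volume {x : E2 | L.symm (x - c) ∈ T} = k * volume T := by
    intro T
    have e1 : {x : E2 | L.symm (x - c) ∈ T} = (fun x => x + (-c)) ⁻¹' (L.symm ⁻¹' T) := by
      ext x; simp [sub_eq_add_neg]
    have e2 : volume (L.symm ⁻¹' T) = μ T :=
      (L.symm.toHomeomorph.toMeasurableEquiv.map_apply T).symm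
    rw [e1, measure_preimage_add_right, e2, hk]
    simp
  have hP : {x | ∃ a b : ℝ, |a| ≤ 1 ∧ |b| ≤ 1 ∧ x = c + a • u + b • v} ⊆
      {x : E2 | L.symm (x - c) ∈ Set.Icc (-1:ℝ) 1 ×ˢ Set.Icc (-1:ℝ) 1} := by
    rintro x ⟨a, b, ha, hb, rfl⟩
    have : c + a • u + b • v - c = L (a, b) := by rw [hL]; simp only []; abel
    rw [Set.mem_ofPred_eq, this, L.symm_apply_apply]
    exact ⟨abs_le.1 ha, abs_le.1 hb⟩
  have hH : {x : E2 | L.symm (x - c) ∈ {x : ℝ × ℝ | |x.1| ≤ 1 ∧ |x.2| ≤ 1 ∧ |x.1 + x.2| ≤ 1}} ⊆ S := by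
    intro x hx
    obtain ⟨⟨s, t⟩, hst⟩ : ∃ y, y = L.symm (x - c) := ⟨_, rfl⟩
    rw [Set.mem_ofPred_eq, ← hst] at hx
    obtain ⟨k1, k2, k3⟩ := hx
    simp only [abs_le] at k1 k2 k3
    have hx : x = c + (s • u + t • v) := by
      have := congrArg L hst
      rw [L.apply_symm_apply, hL] at this
      simp only [] at this
      rw [this]; abel
    have h0 : c ∈ S := by
      have := hS h1 h2 (a := 1/2) (b := 1/2) (by norm_num) (by norm_num) (by norm_num)
      convert this using 1
      module
    have key : ∀ y z : E2, c + y ∈ S → c + z ∈ S → ∀ α β : ℝ, 0 ≤ α → 0 ≤ β → α + β ≤ 1 →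
        x = c + (α • y + β • z) → x ∈ S := by
      intro y z hy hz α β hα hβ hab hxx
      have e : x = (1 - α - β) • c + α • (c + y) + β • (c + z) := by
        rw [hxx]; module
      rw [e]
      have := hS.sum_mem (t := Finset.univ) (w := ![1-α-β, α, β]) (z := ![c, c+y, c+z])
        (by intro i _; fin_cases i <;> simp <;> linarith)
        (by simp [Fin.sum_univ_three]; ring)
        (by intro i _; fin_cases i <;> simpa)
      simpa [Fin.sum_univ_three] using this
    rw [sub_eq_add_neg] at h2 h4 h6
    rcases le_total 0 s with hs | hs <;> rcases le_total 0 t with ht | ht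
    · exact key _ _ h1 h3 s t hs ht k3.2 hx
    · rcases le_total 0 (s + t) with h | h
      · exact key _ _ h5 h1 (-t) (s+t) (by linarith) h (by linarith) (by rw [hx]; module)
      · exact key _ _ h5 h4 s (-s-t) hs (by linarith) (by linarith) (by rw [hx]; module)
    · rcases le_total 0 (s + t) with h | h
      · exact key _ _ h6 h3 (-s) (s+t) (by linarith) h (by linarith) (by rw [hx]; module)
      · exact key _ _ h6 h2 t (-s-t) ht (by linarith) (by linarith) (by rw [hx]; module)
    · exact key _ _ h2 h4 (-s) (-t) (by linarith) (by linarith) (by linarith) (by rw [hx]; module)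
  calc _ ≤ _ := measure_mono hP
    _ = k * 4 := by rw [hvol, vol_sq]
    _ = ENNReal.ofReal (4/3) * (k * 3) := by
      have : (4:ℝ≥0∞) = ENNReal.ofReal (4/3) * 3 := by
        rw [show (3:ℝ≥0∞) = ENNReal.ofReal 3 by norm_num, ← ENNReal.ofReal_mul (by norm_num)]
        norm_num
      rw [this]; ring
    _ ≤ ENNReal.ofReal (4/3) * volume S := by
      gcongr
      calc _ ≤ _ := mul_le_mul_right vol_hex k
        _ ≤ _ := by rw [← hvol]; exact measure_mono hH

lemma line_sub (y z w e : E2) (hne : ∃ k : ℝ, e = k • (z - y)) (hw : ∃ k : ℝ, w = y + k • (z - y)) :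
    {x | ∃ a : ℝ, |a| ≤ 1 ∧ x = w + a • e} ⊆ (affineSpan ℝ {y, z} : Set E2) := by
  rintro x ⟨a, -, rfl⟩
  obtain ⟨k, rfl⟩ := hne
  obtain ⟨m, rfl⟩ := hw
  have := AffineMap.lineMap_mem_affineSpan_pair (m + a * k) y z
  have e : y + m • (z - y) + a • k • (z - y) = AffineMap.lineMap y z (m + a * k) := by
    rw [AffineMap.lineMap_apply_module']
    module
  rw [e]
  exact this

set_option maxHeartbeats 2000000

/-- Every centrally symmetric convex hexagon `H` (convex hull of six distinct vertices
`p 0, …, p 5` in strictly convex cyclic position, with `p (i+3) = 2c - p i`) is contained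
in a parallelogram `P` of area at most `4/3` times the area of `H`, whose sides lie on
lines extending sides of `H`. -/
theorem symmetric_hexagon_in_parallelogram
    (p : Fin 6 → EuclideanSpace ℝ (Fin 2)) (c : EuclideanSpace ℝ (Fin 2))
    (hvert : ∀ i, p i ∉ convexHull ℝ (p '' {j | j ≠ i}))
    (hcyc : ∀ i, segment ℝ (p i) (p (i + 1)) ⊆ frontier (convexHull ℝ (Set.range p)))
    (hsym : ∀ i, p (i + 3) = (2 : ℝ) • c - p i) :
    ∃ (q u v : EuclideanSpace ℝ (Fin 2)), LinearIndependent ℝ ![u, v] ∧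
      convexHull ℝ (Set.range p) ⊆
        {x | ∃ a b : ℝ, |a| ≤ 1 ∧ |b| ≤ 1 ∧ x = q + a • u + b • v} ∧
      volume {x | ∃ a b : ℝ, |a| ≤ 1 ∧ |b| ≤ 1 ∧ x = q + a • u + b • v} ≤
        (ENNReal.ofReal (4 / 3)) * volume (convexHull ℝ (Set.range p)) ∧
      (∃ i : Fin 6, {x | ∃ a : ℝ, |a| ≤ 1 ∧ x = q + a • u + v} ⊆
          (affineSpan ℝ {p i, p (i + 1)} : Set (EuclideanSpace ℝ (Fin 2)))) ∧
      (∃ i : Fin 6, {x | ∃ a : ℝ, |a| ≤ 1 ∧ x = q + a • u - v} ⊆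
          (affineSpan ℝ {p i, p (i + 1)} : Set (EuclideanSpace ℝ (Fin 2)))) ∧
      (∃ i : Fin 6, {x | ∃ b : ℝ, |b| ≤ 1 ∧ x = q + u + b • v} ⊆
          (affineSpan ℝ {p i, p (i + 1)} : Set (EuclideanSpace ℝ (Fin 2)))) ∧
      (∃ i : Fin 6, {x | ∃ b : ℝ, |b| ≤ 1 ∧ x = q - u + b • v} ⊆
          (affineSpan ℝ {p i, p (i + 1)} : Set (EuclideanSpace ℝ (Fin 2)))) := by
  let D : Fin 6 → ℝ := fun i => cr (p (i+1) - p i) (p (i+2) - p (i+1))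
  have hD : ∀ i, 0 < D i * D (i+1) := by
    intro i
    have h := edge_sign p hvert hcyc (i+1) i (i+3) (by clear * -; revert i; decide) (by clear * -; revert i; decide)
      (by clear * -; revert i; decide) (by clear * -; revert i; decide)
    have e2 : i + 1 + 1 = i + 2 := by clear * -; revert i; decide
    have e3 : i + 1 + 2 = i + 3 := by clear * -; revert i; decide
    simp only [D]
    rw [e2] at h ⊢
    rw [e3]
    convert h using 1
    unfold cr
    simp only [PiLp.sub_apply]
    ring
  obtain ⟨k, hk⟩ := Finite.exists_max (fun i => |D i|)
  have hin : ∀ j, p j ∈ convexHull ℝ (Set.range p) := fun j => subset_convexHull ℝ _ ⟨j, rfl⟩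
  have hconv := convex_convexHull ℝ (Set.range p)
  have hAB := hD k
  have hBC := hD (k+1)
  have hB := hk (k+1)
  have hC := hk (k+2)
  have f2 : k + 1 + 1 = k + 2 := by clear * -; revert k; decide
  have f3 : k + 1 + 2 = k + 3 := by clear * -; revert k; decide
  have f4 : k + 2 + 1 = k + 3 := by clear * -; revert k; decide
  have f5 : k + 2 + 2 = k + 4 := by clear * -; revert k; decide
  have g3 : p (k+3) = (2:ℝ) • c - p k := hsym k
  have g4 : p (k+4) = (2:ℝ) • c - p (k+1) := by rw [← hsym]; congr 1; clear * -; revert k; decide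
  have g5 : p (k+5) = (2:ℝ) • c - p (k+2) := by rw [← hsym]; congr 1; clear * -; revert k; decide
  simp only [D, f2, f3, f4, f5] at hAB hBC hB hC
  obtain ⟨a, ha⟩ : ∃ a, p k = c + a := ⟨p k - c, by abel⟩
  obtain ⟨b, hb⟩ : ∃ a, p (k+1) = c + a := ⟨p (k+1) - c, by abel⟩
  obtain ⟨d, hd⟩ : ∃ a, p (k+2) = c + a := ⟨p (k+2) - c, by abel⟩
  rw [ha] at g3
  rw [hb] at g4
  rw [hd] at g5
  replace g3 : p (k+3) = c - a := by rw [g3]; module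
  replace g4 : p (k+4) = c - b := by rw [g4]; module
  replace g5 : p (k+5) = c - d := by rw [g5]; module
  rw [ha, hb, hd, g3] at hAB hB
  rw [hb, hd, g3, g4] at hBC
  rw [ha, hb, hd, g3, g4] at hC
  obtain ⟨A, hA'⟩ : ∃ A, A = cr (b - a) (d - b) := ⟨_, rfl⟩
  obtain ⟨B, hB'⟩ : ∃ B, B = cr (d - b) (- a - d) := ⟨_, rfl⟩
  obtain ⟨C, hC'⟩ : ∃ C, C = cr (- a - d) (a - b) := ⟨_, rfl⟩
  have r1 : c + b - (c + a) = b - a := by abel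
  have r2 : c + d - (c + b) = d - b := by abel
  have r3 : c - a - (c + d) = -a - d := by abel
  have r4 : c - b - (c - a) = a - b := by abel
  rw [r1, r2, r3, ← hA', ← hB'] at hAB
  rw [r2, r3, r4, ← hC', ← hB'] at hBC
  rw [r1, r2, r3, ← hA', ← hB'] at hB
  rw [r1, r2, r3, r4, ← hA', ← hC'] at hC
  have hA0 : A ≠ 0 := by rintro rfl; simp at hAB
  -- normalised ratios
  obtain ⟨r, hr⟩ : ∃ r, r = B / A := ⟨_, rfl⟩
  obtain ⟨t, ht⟩ : ∃ t, t = C / A := ⟨_, rfl⟩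
  have hAC : 0 < A * C := by
    have : 0 < B^2 * (A * C) := by nlinarith
    exact pos_of_mul_pos_right this (sq_nonneg _)
  have hA2 : 0 < A^2 := by positivity
  have hr0 : 0 < r := by
    rw [hr, show B / A = A * B / A^2 by field_simp]; positivity
  have ht0 : 0 < t := by
    rw [ht, show C / A = A * C / A^2 by field_simp]; positivity
  have hr1 : r ≤ 1 := by
    apply le_trans (le_abs_self _)
    rw [hr, abs_div]; exact div_le_one_of_le₀ hB (abs_nonneg _)
  have ht1 : t ≤ 1 := by
    apply le_trans (le_abs_self _)
    rw [ht, abs_div]; exact div_le_one_of_le₀ hC (abs_nonneg _)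
  obtain ⟨u, hu⟩ : ∃ u, u = ((1 + r)/2) • (b - a) := ⟨_, rfl⟩
  obtain ⟨v, hv⟩ : ∃ v, v = ((1 + t)/2) • (d - b) := ⟨_, rfl⟩
  have hbuv : b = u - v := by
    have hx : A * (1 + r) = A + B := by rw [hr]; field_simp
    have hy : A * (1 + t) = A + C := by rw [ht]; field_simp
    have : A • b = A • (u - v) := by
      rw [hu, hv, smul_sub, smul_smul, smul_smul, mul_div_assoc', mul_div_assoc', hx, hy, hA', hB', hC']
      unfold cr
      ext i; fin_cases i <;> simp <;> ring
    exact smul_right_injective _ hA0 this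
  have hr' : (1 + r) ≠ 0 := by positivity
  have ht' : (1 + t) ≠ 0 := by positivity
  have hba : b - a = (2 / (1 + r)) • u := by
    rw [hu, smul_smul]; rw [show 2 / (1 + r) * ((1 + r)/2) = 1 by field_simp]; simp
  have hdb : d - b = (2 / (1 + t)) • v := by
    rw [hv, smul_smul]; rw [show 2 / (1 + t) * ((1 + t)/2) = 1 by field_simp]; simp
  obtain ⟨α, hα⟩ : ∃ α, α = 2 / (1 + r) - 1 := ⟨_, rfl⟩
  obtain ⟨β, hβ⟩ : ∃ β, β = 2 / (1 + t) - 1 := ⟨_, rfl⟩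
  have hα0 : 0 ≤ α := by
    rw [hα, sub_nonneg, le_div_iff₀ (by positivity)]; linarith
  have hβ0 : 0 ≤ β := by
    rw [hβ, sub_nonneg, le_div_iff₀ (by positivity)]; linarith
  have hα1 : α ≤ 1 := by
    rw [hα, sub_le_iff_le_add, div_le_iff₀ (by positivity)]; linarith
  have hβ1 : β ≤ 1 := by
    rw [hβ, sub_le_iff_le_add, div_le_iff₀ (by positivity)]; linarith
  have hauv : a = (-α) • u - v := by
    have : a = b - (b - a) := by abel
    rw [this, hba, hα, hbuv]; module
  have hduv : d = u + β • v := by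
    have : d = b + (d - b) := by abel
    rw [this, hdb, hβ, hbuv]; module
  have hli : LinearIndependent ℝ ![u, v] := by
    rw [LinearIndependent.pair_iff]
    intro x y hxy
    have hcr : cr u v ≠ 0 := by
      have : cr u v = ((1 + r)/2) * ((1 + t)/2) * A := by
        rw [hu, hv, hA']; unfold cr; simp; ring
      rw [this]; positivity
    have e0 := congrArg (fun z : E2 => z 0) hxy
    have e1 := congrArg (fun z : E2 => z 1) hxy
    simp at e0 e1
    constructor
    · have : x * cr u v = 0 := by unfold cr; linear_combination v 1 * e0 - v 0 * e1
      exact (mul_eq_zero.1 this).resolve_right hcr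
    · have : y * cr u v = 0 := by unfold cr; linear_combination u 0 * e1 - u 1 * e0
      exact (mul_eq_zero.1 this).resolve_right hcr
  have hall : ∀ j : Fin 6, j = k ∨ j = k+1 ∨ j = k+2 ∨ j = k+3 ∨ j = k+4 ∨ j = k+5 := by
    clear * -; revert k; decide
  have i0 := hin k
  have i1 := hin (k+1)
  have i2 := hin (k+2)
  have i3 := hin (k+3)
  have i4 := hin (k+4)
  have i5 := hin (k+5)
  rw [ha, hauv] at i0
  rw [hb, hbuv] at i1
  rw [hd, hduv] at i2
  rw [g3, hauv] at i3
  rw [g4, hbuv] at i4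
  rw [g5, hduv] at i5
  have hα' : 1 + α ≠ 0 := by positivity
  have hβ' : 1 + β ≠ 0 := by positivity
  have hsα : 1 / (1 + α) + α / (1 + α) = 1 := by field_simp
  have hsβ : 1 / (1 + β) + β / (1 + β) = 1 := by field_simp
  refine ⟨c, u, v, hli, ?_, ?_, ?_, ?_, ?_, ?_⟩
  · apply convexHull_min
    · rintro _ ⟨j, rfl⟩
      have ab : |α| ≤ 1 := abs_le.2 ⟨by linarith, hα1⟩
      have bb : |β| ≤ 1 := abs_le.2 ⟨by linarith, hβ1⟩
      rcases hall j with rfl | rfl | rfl | rfl | rfl | rfl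
      · exact ⟨-α, -1, by simpa using ab, by simp, by rw [ha, hauv]; module⟩
      · exact ⟨1, -1, by simp, by simp, by rw [hb, hbuv]; module⟩
      · exact ⟨1, β, by simp, bb, by rw [hd, hduv]; module⟩
      · exact ⟨α, 1, ab, by simp, by rw [g3, hauv]; module⟩
      · exact ⟨-1, 1, by simp, by simp, by rw [g4, hbuv]; module⟩
      · exact ⟨-1, -β, by simp, by simpa using bb, by rw [g5, hduv]; module⟩
    · rintro _ ⟨x, y, hx, hy, rfl⟩ _ ⟨x', y', hx', hy', rfl⟩ m n hm hn hmn
      have hc : ∀ x x' : ℝ, |x| ≤ 1 → |x'| ≤ 1 → |m * x + n * x'| ≤ 1 := by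
        intro x x' hx hx'
        rw [abs_le] at *
        constructor <;> nlinarith
      refine ⟨m * x + n * x', m * y + n * y', hc _ _ hx hx', hc _ _ hy hy', ?_⟩
      have : m = 1 - n := by linarith
      rw [this]; module
  · apply core_vol u v c hli _ hconv
    · have := hconv i1 i2 (a := β / (1 + β)) (b := 1 / (1 + β)) (by positivity) (by positivity) (by linarith)
      convert this using 1
      match_scalars <;> field_simp <;> ring
    · have := hconv i4 i5 (a := β / (1 + β)) (b := 1 / (1 + β)) (by positivity) (by positivity) (by linarith)
      convert this using 1
      match_scalars <;> field_simp <;> ring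
    · have := hconv i4 i3 (a := α / (1 + α)) (b := 1 / (1 + α)) (by positivity) (by positivity) (by linarith)
      convert this using 1
      match_scalars <;> field_simp <;> ring
    · have := hconv i1 i0 (a := α / (1 + α)) (b := 1 / (1 + α)) (by positivity) (by positivity) (by linarith)
      convert this using 1
      match_scalars <;> field_simp <;> ring
    · exact i1
    · exact i4
  · refine ⟨k+3, ?_⟩
    have e : k + 3 + 1 = k + 4 := by clear * -; revert k; decide
    have h := line_sub (p (k+3)) (p (k+4)) (c + v) u ⟨-((1 + r)/2), by rw [g3, g4, hu]; module⟩
      ⟨α / (1 + α), by rw [g3, g4, hbuv, hauv]; match_scalars <;> field_simp <;> ring⟩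
    rw [e]
    rintro x ⟨m, hm, rfl⟩
    exact h ⟨m, hm, by abel⟩
  · refine ⟨k, ?_⟩
    have h := line_sub (p k) (p (k+1)) (c - v) u ⟨((1 + r)/2), by rw [ha, hb, hu]; module⟩
      ⟨α / (1 + α), by rw [ha, hb, hbuv, hauv]; match_scalars <;> field_simp <;> ring⟩
    rintro x ⟨m, hm, rfl⟩
    exact h ⟨m, hm, by abel⟩
  · refine ⟨k+1, ?_⟩
    have h := line_sub (p (k+1)) (p (k+2)) (c + u) v ⟨((1 + t)/2), by rw [hd, hb, hv]; module⟩
      ⟨1 / (1 + β), by rw [hd, hb, hbuv, hduv]; match_scalars <;> field_simp <;> ring⟩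
    rw [f2]
    exact h
  · refine ⟨k+4, ?_⟩
    have e : k + 4 + 1 = k + 5 := by clear * -; revert k; decide
    have h := line_sub (p (k+4)) (p (k+5)) (c - u) v ⟨-((1 + t)/2), by rw [g4, g5, hv]; module⟩
      ⟨1 / (1 + β), by rw [g4, g5, hbuv, hduv]; match_scalars <;> field_simp <;> ring⟩
    rw [e]
    exact h
end
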